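/- arXiv:2102.00308 — 8 statements merged into one kernel-verified Lean document; each statement's English description precedes it below -/
import Mathlib

section
/- Let m, r be integers with m ≥ 1 and 0 ≤ r ≤ m(q−1). Then the dimension of RM_q(r,m) over F_q equals Σ_{i=0}^{m} (−1)^i · C(m,i) · C(m+r−iq, m), where C(N,m) denotes the binomial coefficient, with the convention that C(N,m) = 0 whenever the integer N satisfies N < m (in particular when N < 0). -/
/-!
On `V_q(r,m)` the evaluation map is injective, since a polynomial of degree at most `q - 1` in each
variable that vanishes on all of `F^m` is zero. Hence `dim RM_q(r,m) = dim V_q(r,m)`, which is the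
number of exponent vectors `a ∈ {0, …, q-1}^m` with `∑ a_j ≤ r` (`finrank_RM`).

This number is the coefficient of `X ^ r` in `(1 + X + ⋯ + X ^ (q-1)) ^ m * (1 - X)⁻¹`, because
expanding the `m`-th power gives `∑ X ^ (∑ a_j)` over all such vectors and multiplication by
`(1 - X)⁻¹ = ∑ X ^ n` takes partial sums of coefficients. The series equals
`(1 - X ^ q) ^ m * (1 - X) ^ (-(m + 1))`; the binomial theorem for the first factor and
`(1 - X) ^ (-(m + 1)) = ∑ C(m + n, m) X ^ n` for the second give the alternating sum.
-/

open MvPolynomial Finset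

noncomputable section

/-- `V_q(r,m)`: polynomials of total degree at most `r` with degree at most
`q - 1` in each variable, where `q` is the cardinality of the (finite) field. -/
def Vq (F : Type) [Field F] [Fintype F] (r m : ℕ) : Submodule F (MvPolynomial (Fin m) F) :=
  MvPolynomial.restrictTotalDegree (Fin m) F r ⊓
    MvPolynomial.restrictDegree (Fin m) F (Fintype.card F - 1)

/-- The evaluation map `f ↦ (f(P))_{P ∈ F^m}`. -/
def Ev (F : Type) [Field F] [Fintype F] (m : ℕ) :
    MvPolynomial (Fin m) F →ₗ[F] ((Fin m → F) → F) where
  toFun f := fun a => eval a f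
  map_add' f g := by funext a; simp
  map_smul' c f := by funext a; simp

/-- The generalized Reed–Muller code `RM_q(r,m)`, as a subspace of `F^{F^m}`. -/
def RM (F : Type) [Field F] [Fintype F] (r m : ℕ) : Submodule F ((Fin m → F) → F) :=
  (Vq F r m).map (Ev F m)

/-- Hamming weight of a vector. -/
def wt {ι β : Type*} [Zero β] (c : ι → β) : ℕ := Set.ncard (Function.support c)

/-- Minimum distance of a code. -/
def minDist {F : Type} [Field F] [Fintype F] {m : ℕ}
    (C : Submodule F ((Fin m → F) → F)) : ℕ :=
  sInf {w | ∃ c ∈ C, c ≠ 0 ∧ wt c = w}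

/-- Exponent vectors in `{0, …, q-1}^m` with sum at most `r`. -/
def boundedExponents (q m r : ℕ) : Finset (Fin m → ℕ) :=
  (Fintype.piFinset fun _ : Fin m => Finset.range q).filter fun a => ∑ j, a j ≤ r

lemma Vq_eq_restrictSupport (F : Type) [Field F] [Fintype F] (r m : ℕ) :
    Vq F r m = restrictSupport F
      {n : Fin m →₀ ℕ | (n.sum fun _ e => e) ≤ r ∧ ∀ i, n i ≤ Fintype.card F - 1} := by
  ext p
  rw [Vq, Submodule.mem_inf, restrictTotalDegree, restrictDegree, mem_restrictSupport_iff,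
    mem_restrictSupport_iff, mem_restrictSupport_iff, ← Set.subset_inter_iff]
  rfl

lemma finrank_RM (F : Type) [Field F] [Fintype F] (r m : ℕ) :
    Module.finrank F (RM F r m) = (boundedExponents (Fintype.card F) m r).card := by
  have hinj : Function.Injective ((Ev F m).domRestrict (Vq F r m)) := by
    rw [← LinearMap.ker_eq_bot, LinearMap.ker_eq_bot']
    rintro ⟨p, hp⟩ h
    exact Subtype.ext (eq_zero_of_eval_eq_zero (Fin m) F p (fun v => congrFun h v) hp.2)
  have hrange : LinearMap.range ((Ev F m).domRestrict (Vq F r m)) = RM F r m :=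
    LinearMap.range_domRestrict _ _
  rw [← hrange, LinearMap.finrank_range_of_inj hinj, Vq_eq_restrictSupport,
    Module.finrank_eq_nat_card_basis (basisRestrictSupport F _), ← Nat.card_eq_finsetCard]
  refine Nat.card_congr (Equiv.subtypeEquiv Finsupp.equivFunOnFinite fun n => ?_)
  have hcard : 0 < Fintype.card F := Fintype.card_pos
  simp only [boundedExponents, Set.mem_ofPred_eq, Finset.mem_filter, Fintype.mem_piFinset,
    Finset.mem_range, Finsupp.equivFunOnFinite_apply, Nat.lt_iff_le_pred hcard]
  rw [Finsupp.sum_fintype _ _ fun _ => rfl, and_comm]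

/-- The generating function `∑_r #(boundedExponents q m r) X ^ r` is
`(1 + X + ⋯ + X ^ (q-1)) ^ m * (1 - X)⁻¹`. -/
lemma card_boundedExponents_eq_coeff (q m r : ℕ) :
    ((boundedExponents q m r).card : ℤ) =
      PowerSeries.coeff r ((∑ j ∈ Finset.range q, (PowerSeries.X : PowerSeries ℤ) ^ j) ^ m *
        PowerSeries.mk 1) := by
  have hexpand : (∑ j ∈ Finset.range q, (PowerSeries.X : PowerSeries ℤ) ^ j) ^ m =
      ∑ a ∈ Fintype.piFinset fun _ : Fin m => Finset.range q, PowerSeries.X ^ ∑ j, a j := by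
    simp_rw [← Finset.prod_pow_eq_pow_sum]
    rw [← Finset.prod_univ_sum]
    simp
  rw [hexpand, Finset.sum_mul, map_sum]
  simp [PowerSeries.coeff_X_pow_mul', boundedExponents]

lemma geom_pow_mul_mk_one (q m : ℕ) :
    (∑ j ∈ Finset.range q, (PowerSeries.X : PowerSeries ℤ) ^ j) ^ m * PowerSeries.mk 1 =
      (1 - PowerSeries.X ^ q) ^ m * PowerSeries.mk fun n => ((m + n).choose m : ℤ) := by
  rw [← PowerSeries.mk_one_pow_eq_mk_choose_add, ← geom_sum_mul_neg, mul_pow, pow_succ,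
    mul_assoc, ← mul_assoc ((1 - PowerSeries.X) ^ m), ← mul_pow, mul_comm (1 - PowerSeries.X),
    PowerSeries.mk_one_mul_one_sub_eq_one, one_pow, one_mul]

lemma coeff_one_sub_X_pow_mul (q m r : ℕ) (hm : 1 ≤ m) :
    PowerSeries.coeff r ((1 - PowerSeries.X ^ q) ^ m *
      PowerSeries.mk fun n => ((m + n).choose m : ℤ)) =
      ∑ i ∈ Finset.range (m + 1),
        (-1 : ℤ) ^ i * (m.choose i) * ((m + r - i * q).choose m) := by
  have hbinom : (1 - PowerSeries.X ^ q : PowerSeries ℤ) ^ m =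
      ∑ i ∈ Finset.range (m + 1),
        PowerSeries.C ((-1 : ℤ) ^ i * (m.choose i)) * PowerSeries.X ^ (i * q) := by
    rw [sub_eq_neg_add, add_pow]
    refine Finset.sum_congr rfl fun i _ => ?_
    rw [neg_pow, one_pow, mul_one, ← pow_mul, mul_comm q i]
    simp only [map_mul, map_pow, map_neg, map_one, map_natCast]
    ring
  rw [hbinom, Finset.sum_mul, map_sum]
  refine Finset.sum_congr rfl fun i _ => ?_
  rw [mul_assoc, PowerSeries.coeff_C_mul, PowerSeries.coeff_X_pow_mul', PowerSeries.coeff_mk]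
  split_ifs with h
  · rw [Nat.add_sub_assoc h]
  · -- The top entry is below `m`; positivity of `m` covers the case where it truncates to zero.
    rw [Nat.choose_eq_zero_of_lt (by omega : m + r - i * q < m), Nat.cast_zero]

/-- `dim RM_q(r,m) = Σ_{i=0}^{m} (−1)^i C(m,i) C(m+r−iq, m)`.
(Here `m + r - i*q` is truncated subtraction; since `m ≥ 1`, this agrees with the
convention that the binomial coefficient vanishes when its top entry is `< m`,
in particular when it is negative.) -/
theorem stmt_1 (F : Type) [Field F] [Fintype F] (q : ℕ) (hq : q = Fintype.card F)
    (m r : ℕ) (hm : 1 ≤ m) (hr : r ≤ m * (q - 1)) :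
    (Module.finrank F (RM F r m) : ℤ) =
      ∑ i ∈ Finset.range (m + 1),
        (-1 : ℤ) ^ i * (m.choose i) * ((m + r - i * q).choose m) := by
  rw [finrank_RM, ← hq, card_boundedExponents_eq_coeff, geom_pow_mul_mk_one,
    coeff_one_sub_X_pow_mul q m r hm]

end
end

section
/- Let q be a prime power and m ≥ 1 an integer. Then Σ_{i=0}^{m} (−1)^i · C(m,i) · C((m−i)q, m) = q^m, where C(·,·) denotes the binomial coefficient. -/
/-!
Up to reversing the order of summation, `m!` times the left-hand side is the `m`-th forward
difference at `0` of `x ↦ (qx)(qx - 1)⋯(qx - m + 1)`. This polynomial has degree `m` and leading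
coefficient `q ^ m`, so its `m`-th forward difference is the constant `q ^ m * m!`
(`Polynomial.fwdDiff_iter_degree_eq_factorial`).
-/

/-- for `q` a prime power and `m ≥ 1`,
`Σ_{i=0}^{m} (−1)^i C(m,i) C((m−i)q, m) = q^m`. -/
theorem stmt_5 (q m : ℕ) (hq : IsPrimePow q) (hm : 1 ≤ m) :
    ∑ i ∈ Finset.range (m + 1),
        (-1 : ℤ) ^ i * (m.choose i) * (((m - i) * q).choose m) = (q : ℤ) ^ m := by
  have hq0 : (q : ℤ) ≠ 0 := by exact_mod_cast hq.ne_zero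
  let P : Polynomial ℤ := (descPochhammer ℤ m).comp (Polynomial.C (q : ℤ) * Polynomial.X)
  have hdeg : P.natDegree = m := by
    rw [Polynomial.natDegree_comp, descPochhammer_natDegree,
      Polynomial.natDegree_C_mul_X _ hq0, mul_one]
  have hlead : P.leadingCoeff = (q : ℤ) ^ m := by
    rw [Polynomial.leadingCoeff_comp (by rw [Polynomial.natDegree_C_mul_X _ hq0]; exact one_ne_zero),
      (monic_descPochhammer ℤ m).leadingCoeff, descPochhammer_natDegree,
      Polynomial.leadingCoeff_C_mul_X, one_mul]
  have heval (k : ℕ) : P.eval (k : ℤ) = (m.factorial : ℤ) * ((k * q).choose m : ℕ) := by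
    have h := descPochhammer_eval_eq_descFactorial ℤ (k * q) m
    rw [Nat.descFactorial_eq_factorial_mul_choose] at h
    push_cast at h
    simp [P, Polynomial.eval_comp, mul_comm (q : ℤ), h]
  have key := congrFun P.fwdDiff_iter_degree_eq_factorial 0
  rw [hdeg, hlead, fwdDiff_iter_eq_sum_shift] at key
  have hfac : (m.factorial : ℤ) ≠ 0 := by exact_mod_cast m.factorial_ne_zero
  apply mul_left_cancel₀ hfac
  rw [← Finset.sum_range_reflect, Finset.mul_sum]
  calc _ = _ := Finset.sum_congr rfl fun k hk ↦ ?_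
    _ = _ := key
    _ = _ := by simp [mul_comm]
  have hk' : k ≤ m := Nat.lt_succ_iff.mp (Finset.mem_range.mp hk)
  have h1 : m + 1 - 1 - k = m - k := by omega
  rw [h1, Nat.choose_symm hk', Nat.sub_sub_self hk', zero_add, nsmul_one, heval, smul_eq_mul]
  ring
end

section
/- Let m, r be integers with m ≥ 1 and 0 ≤ r ≤ m(q−1), and let t, s be the unique nonnegative integers with r = t(q−1) + s and 0 ≤ s ≤ q−2. Then the minimum distance of the generalized Reed–Muller code RM_q(r,m) equals (q−s)·q^{m−t−1} when t ≤ m−1 (i.e., when r < m(q−1)), and equals 1 when r = m(q−1). -/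
/-!
The lower bound is proved by induction on the number of variables. Write a nonzero reduced `f` of
total degree at most `r = t(q-1)+s` as a polynomial in its first variable, of degree `d ≤ q-1`, with
leading coefficient `g`; then `g` is reduced, nonzero, of total degree at most `r-d`. Wherever
`g` does not vanish, `f` has at least `q-d` nonzeros on the corresponding line, so the number of
nonzeros of `f` is at least `(q-d)` times that of `g` (`card_sub_natDegree_mul_le`). The claimed
bound then follows from the one for `g` and an elementary inequality, which depends on whether
`d ≤ s` (`sub_mul_le_of_le`) or `d > s` (`sub_le_mul_of_lt`); when `t = m-1` and `d ≤ s`, it is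
enough that `g` is nonzero at some point.

The bound is attained by a product of linear factors `X_i - a`, with `a ∈ S_i`, whose nonzeros form
the box `∏ S_iᶜ` (`exists_box_codeword`): take `|S_i| = q-1` for `i < t`, `|S_t| = s`, and
`S_i = ∅` for `i > t`.
-/

open MvPolynomial Finset

noncomputable section

/-- The numerical inequality of the induction step when the degree `d` in the first variable is at
most `s`. -/
theorem sub_mul_le_of_le {q d s : ℕ} (hd : d ≤ s) (hs : s ≤ q) :
    (q - s) * q ≤ (q - d) * (q - (s - d)) := by
  obtain ⟨e, rfl⟩ := Nat.exists_eq_add_of_le hd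
  obtain ⟨u, rfl⟩ := Nat.exists_eq_add_of_le hs
  rw [show d + e + u - (d + e) = u by omega, show d + e + u - d = e + u by omega,
    show d + e + u - (d + e - d) = d + u by omega]
  nlinarith [Nat.zero_le (d * e)]

/-- The numerical inequality of the induction step when the degree `d` in the first variable
exceeds `s`, so that subtracting `d` from `t(q-1)+s` borrows from `t`. -/
theorem sub_le_mul_of_lt {q d s : ℕ} (hd : s < d) (hdq : d < q) :
    q - s ≤ (q - d) * (q - (q - 1 + s - d)) := by
  obtain ⟨e, rfl⟩ := Nat.exists_eq_add_of_lt hd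
  obtain ⟨u, rfl⟩ := Nat.exists_eq_add_of_lt hdq
  rw [show s + e + 1 + u + 1 - s = e + u + 2 by omega,
    show s + e + 1 + u + 1 - (s + e + 1) = u + 1 by omega,
    show s + e + 1 + u + 1 - (s + e + 1 + u + 1 - 1 + s - (s + e + 1)) = e + 2 by omega]
  nlinarith [Nat.zero_le (u * e)]

/-- Over each point `b` where the leading coefficient of `f` (as a polynomial in the first
variable, of degree `d`) does not vanish, at most `d` of the `q` points of the fibre are zeros of
`f`. -/
theorem card_sub_natDegree_mul_le {F : Type} [Field F] [Fintype F] {n : ℕ} (f : MvPolynomial (Fin (n + 1)) F) :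
    (Fintype.card F - (finSuccEquiv F n f).natDegree) *
      {b : Fin n → F | eval b (finSuccEquiv F n f).leadingCoeff ≠ 0}.ncard ≤
    {a : Fin (n + 1) → F | eval a f ≠ 0}.ncard := by
  classical
  set P := finSuccEquiv F n f with hP
  set T : Finset (Fin n → F) := {b | eval b P.leadingCoeff ≠ 0}
  set A : Finset (Fin (n + 1) → F) := {a | eval a f ≠ 0}
  have hT : {b : Fin n → F | eval b P.leadingCoeff ≠ 0}.ncard = #T := by
    rw [← Set.ncard_coe_finset]; congr 1; ext; simp [T]
  have hA : {a : Fin (n + 1) → F | eval a f ≠ 0}.ncard = #A := by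
    rw [← Set.ncard_coe_finset]; congr 1; ext; simp [A]
  rw [hT, hA]
  calc (Fintype.card F - P.natDegree) * #T
      = ∑ b ∈ T, (Fintype.card F - P.natDegree) := by simp [mul_comm]
    _ ≤ ∑ b ∈ T, #{a ∈ A | Fin.tail a = b} := by
        refine Finset.sum_le_sum fun b hb => ?_
        replace hb : eval b P.leadingCoeff ≠ 0 := by simpa [T] using hb
        set p : Polynomial F := P.map (eval b)
        have hp : p ≠ 0 := by
          intro h
          apply hb
          have := congrArg (fun x => Polynomial.coeff x P.natDegree) h
          simpa [p, Polynomial.coeff_map] using this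
        have h1 : Fintype.card F - P.natDegree ≤ #(p.roots.toFinsetᶜ) := by
          rw [Finset.card_compl]
          have := (Multiset.toFinset_card_le p.roots).trans (Polynomial.card_roots' p)
          have h2 : p.natDegree ≤ P.natDegree := Polynomial.natDegree_map_le
          omega
        refine h1.trans (Finset.card_le_card_of_injOn (fun x => Fin.cons x b) ?_ ?_)
        · intro x hx
          have hx : p.eval x ≠ 0 := by
            have : ¬ (p ≠ 0 ∧ p.IsRoot x) := by simpa using hx
            tauto
          simp only [A, Finset.coe_filter, Set.mem_ofPred_eq, Finset.mem_filter,
            Finset.mem_univ, true_and, Fin.tail_cons, and_true]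
          rw [eval_eq_eval_mv_eval']
          exact hx
        · intro x _ y _ h
          exact (Fin.cons_injective2 h).1
    _ = #{a ∈ A | (Fin.tail a : Fin n → F) ∈ T} := by
        rw [Finset.card_eq_sum_card_fiberwise (f := (Fin.tail : _ → Fin n → F)) (t := T)]
        · refine Finset.sum_congr rfl fun b hb => ?_
          congr 1; ext a; simp only [Finset.mem_filter]
          constructor
          · rintro ⟨h, rfl⟩; exact ⟨⟨h, hb⟩, rfl⟩
          · rintro ⟨⟨h, _⟩, h'⟩; exact ⟨h, h'⟩
        · intro a ha; simp at ha; exact ha.2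
    _ ≤ #A := Finset.card_filter_le _ _

theorem mem_restrictDegree_iff_degreeOf {F : Type} [Field F] {n N : ℕ}
    (f : MvPolynomial (Fin n) F) :
    f ∈ restrictDegree (Fin n) F N ↔ ∀ i, degreeOf i f ≤ N := by
  simp only [mem_restrictDegree, degreeOf_le_iff]
  exact ⟨fun h i m hm => h m hm i, fun h m hm i => h i m hm⟩

theorem one_le_ncard_nonzeros {F : Type} [Field F] [Fintype F] {n : ℕ}
    {f : MvPolynomial (Fin n) F} (hf : f ≠ 0)
    (hdeg : ∀ i, degreeOf i f ≤ Fintype.card F - 1) :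
    1 ≤ {a : Fin n → F | eval a f ≠ 0}.ncard := by
  rw [Nat.succ_le_iff, Set.ncard_pos (Set.toFinite _)]
  by_contra h
  rw [Set.not_nonempty_iff_eq_empty] at h
  refine hf (eq_zero_of_eval_eq_zero _ _ f (fun v => ?_) ((mem_restrictDegree_iff_degreeOf f).2 hdeg))
  by_contra hv
  have : v ∈ {a : Fin n → F | eval a f ≠ 0} := hv
  simp [h] at this

/-- The lower bound; `k` stands for the exponent `m - t - 1`, so that `t ≤ m - 1` is encoded in
the number of variables. -/
theorem le_ncard_nonzeros {F : Type} [Field F] [Fintype F] {q : ℕ} (hq : q = Fintype.card F)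
    (m : ℕ) : ∀ (t s k : ℕ), m = t + k + 1 → s ≤ q - 2 → ∀ f : MvPolynomial (Fin m) F, f ≠ 0 →
      f.totalDegree ≤ t * (q - 1) + s → (∀ i, degreeOf i f ≤ q - 1) →
      (q - s) * q ^ k ≤ {a : Fin m → F | eval a f ≠ 0}.ncard := by
  have hq2 : 2 ≤ q := by
    have := Fintype.one_lt_card (α := F)
    omega
  induction m with
  | zero => intro t s k h; omega
  | succ n ih =>
    intro t s k hm hs f hf htot hdeg
    have key := card_sub_natDegree_mul_le f
    set P := finSuccEquiv F n f with hP
    have hP0 : P ≠ 0 := by simpa [hP] using hf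
    have hg0 : P.leadingCoeff ≠ 0 := Polynomial.leadingCoeff_ne_zero.2 hP0
    have hd : P.natDegree ≤ q - 1 := by
      rw [hP, natDegree_finSuccEquiv]; exact hdeg 0
    have hgtot : P.leadingCoeff.totalDegree + P.natDegree ≤ t * (q - 1) + s :=
      (totalDegree_coeff_finSuccEquiv_add_le f _ hg0).trans htot
    have hgdeg : ∀ i, degreeOf i P.leadingCoeff ≤ q - 1 := fun i =>
      (degreeOf_coeff_finSuccEquiv f i _).trans (hdeg _)
    rw [← hq] at key
    refine le_trans ?_ key
    generalize P.natDegree = d at *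
    generalize P.leadingCoeff = g at *
    by_cases hds : d ≤ s
    · cases k with
      | zero =>
        have h1 := one_le_ncard_nonzeros hg0 (by rwa [← hq])
        calc (q - s) * q ^ 0 ≤ (q - d) * 1 := by simp only [pow_zero, mul_one]; omega
          _ ≤ _ := Nat.mul_le_mul_left _ h1
      | succ k =>
        have h1 := ih t (s - d) k (by omega) (by omega) g hg0 (by omega) hgdeg
        calc (q - s) * q ^ (k + 1) = (q - s) * q * q ^ k := by ring
          _ ≤ (q - d) * (q - (s - d)) * q ^ k :=
            Nat.mul_le_mul_right _ (sub_mul_le_of_le hds (by omega))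
          _ = (q - d) * ((q - (s - d)) * q ^ k) := by ring
          _ ≤ _ := Nat.mul_le_mul_left _ h1
    · push Not at hds
      cases t with
      | zero => simp only [zero_mul] at hgtot; omega
      | succ t =>
        have h1 := ih t (q - 1 + s - d) k (by omega) (by omega) g hg0
          (by rw [add_mul] at hgtot; omega) hgdeg
        calc (q - s) * q ^ k ≤ (q - d) * (q - (q - 1 + s - d)) * q ^ k :=
            Nat.mul_le_mul_right _ (sub_le_mul_of_lt hds (by omega))
          _ = (q - d) * ((q - (q - 1 + s - d)) * q ^ k) := by ring
          _ ≤ _ := Nat.mul_le_mul_left _ h1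

/-- A product of `n i ≤ q - 1` distinct linear factors in each variable `X i` is a codeword whose
nonzeros form a box with sides of size `q - n i`. -/
theorem exists_box_codeword {F : Type} [Field F] [Fintype F] {m r : ℕ} (n : Fin m → ℕ)
    (hn : ∀ i, n i ≤ Fintype.card F - 1) (hsum : ∑ i, n i ≤ r) :
    ∃ c ∈ RM F r m, c ≠ 0 ∧ wt c = ∏ i, (Fintype.card F - n i) := by
  classical
  have hcard : 0 < Fintype.card F := Fintype.card_pos
  have hS : ∀ i, ∃ S : Finset F, #S = n i := fun i => by
    obtain ⟨S, -, hS⟩ := Finset.exists_subset_card_eq (s := (Finset.univ : Finset F)) (n := n i)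
      (by rw [Finset.card_univ]; have := hn i; omega)
    exact ⟨S, hS⟩
  choose S hS using hS
  let f : MvPolynomial (Fin m) F := ∏ i, ∏ a ∈ S i, (X i - C a)
  have hsupp : Function.support (Ev F m f) = ↑(Fintype.piFinset fun i => (S i)ᶜ) := by
    ext x
    simp only [Ev, f, LinearMap.coe_mk, AddHom.coe_mk, Function.mem_support, map_prod, map_sub,
      eval_X, eval_C, Finset.prod_ne_zero_iff, Finset.mem_univ, true_implies, Finset.mem_coe,
      Fintype.mem_piFinset, Finset.mem_compl, sub_ne_zero]
    exact forall_congr' fun i => ⟨fun h hx => h _ hx rfl, fun h a ha e => h (e ▸ ha)⟩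
  have hwt : wt (Ev F m f) = ∏ i, (Fintype.card F - n i) := by
    rw [wt, hsupp, Set.ncard_coe_finset, Fintype.card_piFinset]
    simp [Finset.card_compl, hS]
  refine ⟨Ev F m f, Submodule.mem_map_of_mem ⟨?_, ?_⟩, ?_, hwt⟩
  · refine (mem_restrictTotalDegree _ _ _).2 (le_trans ?_ hsum)
    refine (totalDegree_finsetProd _ _).trans (Finset.sum_le_sum fun i _ => ?_)
    refine (totalDegree_finsetProd _ _).trans ?_
    rw [← hS i, Finset.card_eq_sum_ones]
    refine Finset.sum_le_sum fun a _ => ?_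
    exact (totalDegree_sub _ _).trans (by simp)
  · refine (mem_restrictDegree_iff_degreeOf _).2 fun j => le_trans ?_ (hn j)
    refine (degreeOf_prod_le _ _ _).trans ?_
    calc ∑ i, degreeOf j (∏ a ∈ S i, (X i - C a) : MvPolynomial (Fin m) F)
        ≤ ∑ i, (if j = i then n i else 0) := by
          refine Finset.sum_le_sum fun i _ => (degreeOf_prod_le _ _ _).trans ?_
          calc ∑ a ∈ S i, degreeOf j (X i - C a : MvPolynomial (Fin m) F)
              ≤ ∑ a ∈ S i, (if j = i then 1 else 0) :=
                Finset.sum_le_sum fun a _ =>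
                  (degreeOf_sub_le _ _ _).trans (by simp [degreeOf_X])
            _ = _ := by split_ifs <;> simp [hS]
      _ = n j := by simp
  · intro h0
    have hpos : 0 < ∏ i, (Fintype.card F - n i) :=
      Finset.prod_pos fun i _ => by have := hn i; omega
    rw [← hwt, h0] at hpos
    simp [wt] at hpos

theorem minDist_eq {F : Type} [Field F] [Fintype F] {m w : ℕ}
    {C : Submodule F ((Fin m → F) → F)} (hex : ∃ c ∈ C, c ≠ 0 ∧ wt c = w)
    (hle : ∀ c ∈ C, c ≠ 0 → w ≤ wt c) : minDist C = w := by
  refine le_antisymm (Nat.sInf_le hex) (le_csInf ⟨w, hex⟩ ?_)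
  rintro _ ⟨c, hc, h0, rfl⟩
  exact hle c hc h0

/-- with `r = t(q−1) + s`, `0 ≤ s ≤ q−2`, the minimum distance of
`RM_q(r,m)` is `(q−s)·q^{m−t−1}` when `r < m(q−1)`, and `1` when `r = m(q−1)`. -/
theorem stmt_6 (F : Type) [Field F] [Fintype F] (q : ℕ) (hq : q = Fintype.card F)
    (m r t s : ℕ) (hm : 1 ≤ m) (hr : r ≤ m * (q - 1))
    (hts : r = t * (q - 1) + s) (hs : s ≤ q - 2) :
    minDist (RM F r m) = if r = m * (q - 1) then 1 else (q - s) * q ^ (m - t - 1) := by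
  have hq2 : 2 ≤ q := by
    have := Fintype.one_lt_card (α := F)
    omega
  split_ifs with h
  · refine minDist_eq ?_ ?_
    · obtain ⟨c, hc, h0, hw⟩ := exists_box_codeword (F := F) (m := m) (r := r)
        (fun _ => q - 1) (fun _ => by rw [hq]) (by simp [h])
      refine ⟨c, hc, h0, hw.trans (Finset.prod_eq_one fun _ _ => ?_)⟩
      omega
    · intro c _ h0
      rw [wt, Nat.succ_le_iff, Set.ncard_pos (Set.toFinite _)]
      exact Function.support_nonempty_iff.2 h0
  · have htm : t < m := by
      by_contra hcon
      push Not at hcon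
      have := Nat.mul_le_mul_right (q - 1) hcon
      omega
    obtain ⟨k, rfl⟩ := Nat.exists_eq_add_of_lt htm
    rw [show t + k + 1 - t - 1 = k by omega]
    refine minDist_eq ?_ ?_
    · let n : ℕ → ℕ := fun i => if i < t then q - 1 else if i = t then s else 0
      -- A sum or product over the `t + k + 1` variables splits as `i < t`, `i = t`, `i > t`.
      have hn1 : ∀ i ∈ Finset.range t, n i = q - 1 := fun i hi => by
        simp [n, Finset.mem_range.1 hi]
      have hn2 : n t = s := by simp [n]
      have hn3 : ∀ i, n (t + (i + 1)) = 0 := fun i => by simp [n]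
      obtain ⟨c, hc, h0, hw⟩ := exists_box_codeword (F := F) (m := t + k + 1) (r := r)
        (fun i => n i) (fun i => by simp only [n]; split_ifs <;> omega) (by
          rw [Fin.sum_univ_eq_sum_range n, add_assoc, Finset.sum_range_add,
            Finset.sum_congr rfl hn1, Finset.sum_range_succ']
          simp [hn2, hn3, hts])
      refine ⟨c, hc, h0, hw.trans ?_⟩
      rw [← hq, Fin.prod_univ_eq_prod_range (fun i => q - n i), add_assoc, Finset.prod_range_add,
        Finset.prod_congr rfl (fun i hi => by rw [hn1 i hi]), Finset.prod_range_succ']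
      simp [hn2, hn3, show q - (q - 1) = 1 by omega, mul_comm]
    · rintro c ⟨f, ⟨hf1, hf2⟩, rfl⟩ h0
      refine le_ncard_nonzeros hq _ t s k rfl hs f ?_ ?_ ?_
      · rintro rfl
        simp at h0
      · rw [← hts]
        exact (mem_restrictTotalDegree _ _ _).1 hf1
      · rw [hq]
        exact (mem_restrictDegree_iff_degreeOf _).1 hf2

end
end

section
/- Let m, r be integers with m ≥ 1 and 0 ≤ r < m(q−1), and let t, s be the unique nonnegative integers with r = t(q−1) + s and 0 ≤ s ≤ q−2 (so t ≤ m−1). Let ω_0, ω_1, …, ω_t ∈ F_q with ω_0 ≠ 0 and let ω'_1, …, ω'_s be distinct elements of F_q. Then the polynomial f(X_1,…,X_m) = ω_0 · Π_{i=1}^{t} (1 − (X_i − ω_i)^{q−1}) · Π_{j=1}^{s} (X_{t+1} − ω'_j) lies in V_q(r,m) and its evaluation vector Ev(f) has Hamming weight exactly (q−s)·q^{m−t−1}; in particular, Ev(f) is a minimum weight codeword of RM_q(r,m). -/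
/-!
The support of `Ev f` is a box: each factor `1 - (X_i - ω_i)^(q-1)` is the indicator of `X_i = ω_i`,
so the first `t` coordinates are fixed, the next one avoids the `s` values `ω'_j`, and the remaining
`m - t - 1` are free (`eval_ne_zero_iff`, `card_box`).

Minimality is a lower bound for every nonzero codeword. A nonzero polynomial has at least
`∏ (q - d_i)` nonzeros for some monomial `d` of its support (`footprint`, an iterated root bound).
For an element of `V_q(r,m)` every `d_i` is at most `q - 1` and `∑ d_i ≤ t (q-1) + s`, and under
these constraints the product is at least `(q - s) q^(m-t-1)` (`prod_bound`).
-/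

open MvPolynomial Finset

noncomputable section

/-- The product `∏ (q - dᵢ)` over exponents `0 ≤ dᵢ ≤ q - 1` with `∑ dᵢ ≤ t (q - 1) + s` is smallest
when the total degree is concentrated greedily: `t` exponents equal to `q - 1` and one equal to `s`.
The induction removes `k = d 0`; the two cases `k ≤ s` and `k > s` reduce to
`q (q - s) ≤ (q - k) (q - s + k)` and `q - s ≤ (q - k) (1 + k - s)`. -/
theorem prod_bound (q : ℕ) (m : ℕ) : ∀ (t s : ℕ) (d : Fin m → ℕ), (∀ i, d i + 1 ≤ q) →
    s + 1 ≤ q → t < m → ∑ i, d i ≤ t * (q - 1) + s →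
    (q - s) * q ^ (m - t - 1) ≤ ∏ i, (q - d i) := by
  induction m with
  | zero => intro t s d _ _ ht; omega
  | succ m ih =>
    intro t s d hd hs ht hsum
    rw [Fin.prod_univ_succ]
    rw [Fin.sum_univ_succ] at hsum
    have h0 := hd 0
    have hone : 1 ≤ ∏ i : Fin m, (q - d i.succ) :=
      Nat.one_le_iff_ne_zero.mpr (Finset.prod_ne_zero_iff.mpr fun i _ => by
        have := hd i.succ; omega)
    generalize d 0 = k at *
    by_cases hks : k ≤ s
    · rcases Nat.lt_or_ge t m with htm | htm
      · have h := ih t (s - k) (fun i => d i.succ) (fun i => hd _) (by omega) htm (by omega)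
        obtain ⟨n, rfl⟩ : ∃ n, m = t + 1 + n := ⟨m - t - 1, by omega⟩
        have e1 : t + 1 + n + 1 - t - 1 = n + 1 := by omega
        have e2 : t + 1 + n - t - 1 = n := by omega
        rw [e1]
        rw [e2] at h
        refine le_trans ?_ (Nat.mul_le_mul_left _ h)
        rw [pow_succ', ← mul_assoc, ← mul_assoc]
        refine Nat.mul_le_mul_right _ ?_
        obtain ⟨a, rfl⟩ := Nat.exists_eq_add_of_le hks
        obtain ⟨b, rfl⟩ := Nat.exists_eq_add_of_le hs
        have e3 : k + a + 1 + b - (k + a) = b + 1 := by omega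
        have e4 : k + a + 1 + b - k = a + b + 1 := by omega
        have e5 : k + a + 1 + b - (k + a - k) = k + b + 1 := by omega
        rw [e3, e4, e5]
        nlinarith [Nat.zero_le (a * k)]
      · have : m + 1 - t - 1 = 0 := by omega
        rw [this, pow_zero]
        exact Nat.mul_le_mul (by omega) hone
    · rcases t with _ | t
      · omega
      · have hq : (t + 1) * (q - 1) = t * (q - 1) + (q - 1) := by ring
        have h := ih t (q - 1 + s - k) (fun i => d i.succ) (fun i => hd _) (by omega) (by omega)
          (by rw [hq] at hsum; omega)
        have e1 : m + 1 - (t + 1) - 1 = m - t - 1 := by omega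
        rw [e1]
        refine le_trans ?_ (Nat.mul_le_mul_left _ h)
        rw [← mul_assoc]
        refine Nat.mul_le_mul_right _ ?_
        obtain ⟨a, rfl⟩ := Nat.exists_eq_add_of_le (Nat.lt_of_not_le hks)
        obtain ⟨b, rfl⟩ := Nat.exists_eq_add_of_le h0
        have e3 : s.succ + a + 1 + b - s = a + b + 2 := by omega
        have e4 : s.succ + a + 1 + b - (s.succ + a) = b + 1 := by omega
        have e5 : s.succ + a + 1 + b - (s.succ + a + 1 + b - 1 + s - (s.succ + a)) = a + 2 := by
          omega
        rw [e3, e4, e5]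
        nlinarith [Nat.zero_le (a * b)]

/-- A nonzero polynomial has a monomial `d` in its support such that it is nonzero at no fewer than
`∏ (q - dᵢ)` points. In one variable this is the root bound; in general, view `f` as a univariate
polynomial in the first variable, apply induction to its leading coefficient, and use the root bound
on each fibre where that coefficient does not vanish. Truncated subtraction makes the bound
trivially true when some `dᵢ ≥ q`. -/
theorem footprint (F : Type) [Field F] [Fintype F] [DecidableEq F] (m : ℕ) :
    ∀ f : MvPolynomial (Fin m) F, f ≠ 0 → ∃ d ∈ f.support,
      ∏ i, (Fintype.card F - d i) ≤ #{a : Fin m → F | eval a f ≠ 0} := by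
  induction m with
  | zero =>
    intro f hf
    obtain ⟨d, hd⟩ := Finset.nonempty_iff_ne_empty.mpr (fun h => hf (support_eq_empty.mp h))
    refine ⟨d, hd, ?_⟩
    rw [Finset.univ_eq_empty, Finset.prod_empty, Nat.one_le_iff_ne_zero, Finset.card_ne_zero]
    refine ⟨0, ?_⟩
    simp only [Finset.mem_filter, Finset.mem_univ, true_and]
    intro h
    apply hf
    rw [eq_C_of_isEmpty f] at h ⊢
    simpa using h
  | succ m ih =>
    intro f hf
    set p := finSuccEquiv F m f with hp
    have hp0 : p ≠ 0 := by simpa [hp] using hf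
    obtain ⟨d, hd, hcard⟩ := ih p.leadingCoeff (by simpa using hp0)
    refine ⟨d.cons p.natDegree, mem_support_coeff_finSuccEquiv.mp hd, ?_⟩
    rw [Fin.prod_univ_succ]
    simp only [Finsupp.cons_zero, Finsupp.cons_succ]
    rw [mul_comm]
    refine le_trans (Nat.mul_le_mul_right _ hcard) ?_
    -- Count the nonzeros of `f` over the points `b` where the leading coefficient survives.
    have hmap : ∀ a ∈ ({a : Fin (m + 1) → F |
        eval (Fin.tail a) p.leadingCoeff ≠ 0 ∧ eval a f ≠ 0} : Finset _),
        Fin.tail a ∈ ({a : Fin m → F | eval a p.leadingCoeff ≠ 0} : Finset _) := by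
      intro a ha
      simp only [Finset.mem_filter, Finset.mem_univ, true_and] at ha ⊢
      exact ha.1
    refine le_trans ?_ (Finset.card_le_card (s := {a : Fin (m + 1) → F |
      eval (Fin.tail a) p.leadingCoeff ≠ 0 ∧ eval a f ≠ 0}) ?_)
    · refine le_of_le_of_eq ?_ (Finset.card_eq_sum_card_fiberwise hmap).symm
      rw [← smul_eq_mul]
      refine Finset.card_nsmul_le_sum _ _ _ fun b hb => ?_
      simp only [Finset.mem_filter, Finset.mem_univ, true_and] at hb
      set g := p.map (eval b) with hg
      have hg0 : g ≠ 0 := fun h => hb (by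
        have := congrArg (fun u => Polynomial.coeff u p.natDegree) h
        simpa [hg] using this)
      have hroots : Fintype.card F - p.natDegree ≤ #{x : F | g.eval x ≠ 0} := by
        have h1 : #{x : F | g.eval x = 0} ≤ p.natDegree := by
          refine le_trans ?_ (le_trans (Polynomial.card_roots' g) Polynomial.natDegree_map_le)
          refine le_trans (Finset.card_le_card ?_) (Multiset.toFinset_card_le g.roots)
          intro x hx
          simpa [hg0] using hx
        have h2 := Finset.card_filter_add_card_filter_not (s := (Finset.univ : Finset F))
          (fun x => g.eval x = 0)
        rw [Finset.card_univ] at h2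
        simp only [ne_eq]
        omega
      refine le_trans hroots (Finset.card_le_card_of_injOn (fun x => Fin.cons x b) ?_ ?_)
      · intro x hx
        simp only [Finset.coe_filter, Set.mem_ofPred_eq, Finset.mem_filter,
          Finset.mem_univ, true_and, Fin.tail_cons, and_true] at hx ⊢
        refine ⟨hb, ?_⟩
        rwa [eval_eq_eval_mv_eval']
      · intro x _ y _ h
        exact (Fin.cons_inj.mp h).1
    · intro a ha
      simp only [Finset.mem_filter, Finset.mem_univ, true_and] at ha ⊢
      exact ha.2

theorem wt_Ev (F : Type) [Field F] [Fintype F] [DecidableEq F] (m : ℕ)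
    (f : MvPolynomial (Fin m) F) :
    wt (Ev F m f) = #{a : Fin m → F | eval a f ≠ 0} := by
  rw [wt, ← Set.ncard_coe_finset]
  congr 1
  ext a
  simp [Ev]

theorem wt_lower (F : Type) [Field F] [Fintype F] (m r t s : ℕ)
    (hts : r = t * (Fintype.card F - 1) + s) (hs : s + 1 ≤ Fintype.card F) (ht : t < m)
    (g : MvPolynomial (Fin m) F) (hg : g ∈ Vq F r m) (hg0 : g ≠ 0) :
    (Fintype.card F - s) * Fintype.card F ^ (m - t - 1) ≤ wt (Ev F m g) := by
  classical
  obtain ⟨d, hd, hcard⟩ := footprint F m g hg0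
  rw [wt_Ev]
  refine le_trans (prod_bound _ m t s d (fun i => ?_) hs ht ?_) hcard
  · have := (mem_restrictDegree _ _ _).mp hg.2 d hd i
    omega
  · rw [← hts]
    have h1 := (mem_restrictTotalDegree _ _ _).mp hg.1
    have h2 := le_totalDegree hd
    rw [Finsupp.sum_fintype _ _ (fun _ => rfl)] at h2
    exact h2.trans h1

theorem mem_Vq_of_form (F : Type) [Field F] [Fintype F] (m t s : ℕ)
    (hs : s ≤ Fintype.card F - 1) (ht : t < m) (ω₀ : F) (ω : Fin t → F) (ω' : Fin s → F) :
    C ω₀ * (∏ i : Fin t, (1 - (X (Fin.castLE ht.le i) - C (ω i)) ^ (Fintype.card F - 1))) *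
      (∏ j : Fin s, (X (⟨t, ht⟩ : Fin m) - C (ω' j))) ∈ Vq F (t * (Fintype.card F - 1) + s) m := by
  classical
  set n := Fintype.card F - 1
  refine ⟨(mem_restrictTotalDegree _ _ _).mpr ?_, (mem_restrictDegree_iff_sup _ _ _).mpr fun k => ?_⟩
  · have hX : ∀ (i : Fin m) (c : F), (X i - C c : MvPolynomial (Fin m) F).totalDegree ≤ 1 :=
      fun i c => (totalDegree_sub_C_le _ _).trans (totalDegree_X i).le
    refine (totalDegree_mul _ _).trans (Nat.add_le_add ((totalDegree_mul _ _).trans ?_) ?_)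
    · rw [totalDegree_C, zero_add]
      refine (totalDegree_finsetProd _ _).trans
        ((Finset.sum_le_card_nsmul _ _ n fun i _ => ?_).trans (by simp))
      refine (totalDegree_sub _ _).trans (max_le (by simp) ((totalDegree_pow _ _).trans ?_))
      exact (Nat.mul_le_mul_left _ (hX _ _)).trans (by simp)
    · exact (totalDegree_finsetProd _ _).trans
        ((Finset.sum_le_card_nsmul _ _ 1 fun j _ => hX _ _).trans (by simp))
  · rw [← degreeOf_def]
    have hX : ∀ (i : Fin m) (c : F), (X i - C c : MvPolynomial (Fin m) F).degreeOf k ≤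
        if k = i then 1 else 0 := fun i c =>
      (degreeOf_sub_le _ _ _).trans (by rw [degreeOf_X, degreeOf_C]; simp)
    have h1 : ∀ i : Fin t, degreeOf k
        (1 - (X (Fin.castLE ht.le i) - C (ω i)) ^ n : MvPolynomial (Fin m) F) ≤
        if k = Fin.castLE ht.le i then n else 0 := fun i => by
      refine (degreeOf_sub_le _ _ _).trans
        (max_le (by simp) ((degreeOf_pow_le _ _ _).trans ((Nat.mul_le_mul_left _ (hX _ _)).trans ?_)))
      split_ifs <;> simp
    have h2 : degreeOf k (∏ i : Fin t, (1 - (X (Fin.castLE ht.le i) - C (ω i)) ^ n) :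
        MvPolynomial (Fin m) F) ≤ if k.val < t then n else 0 := by
      refine (degreeOf_prod_le _ _ _).trans ((Finset.sum_le_sum fun i _ => h1 i).trans ?_)
      split_ifs with hk
      · rw [Finset.sum_eq_single_of_mem (⟨k.val, hk⟩ : Fin t) (Finset.mem_univ _)]
        · split_ifs <;> simp
        · intro i _ hi
          rw [if_neg]
          rintro rfl
          exact hi (Fin.ext rfl)
      · refine (Finset.sum_eq_zero fun i _ => if_neg ?_).le
        rintro rfl
        exact hk i.2
    have h3 : degreeOf k (∏ j : Fin s, (X (⟨t, ht⟩ : Fin m) - C (ω' j)) :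
        MvPolynomial (Fin m) F) ≤ if k.val = t then s else 0 := by
      refine (degreeOf_prod_le _ _ _).trans ((Finset.sum_le_sum fun i _ => hX _ _).trans ?_)
      simp [Fin.ext_iff]
    refine (degreeOf_mul_le _ _ _).trans
      ((Nat.add_le_add ((degreeOf_mul_le _ _ _).trans (Nat.add_le_add_left h2 _)) h3).trans ?_)
    rw [degreeOf_C]
    split_ifs <;> omega

theorem eval_ne_zero_iff (F : Type) [Field F] [Fintype F] (m t s : ℕ) (ht : t < m)
    (ω₀ : F) (hω₀ : ω₀ ≠ 0) (ω : Fin t → F) (ω' : Fin s → F) (a : Fin m → F) :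
    eval a (C ω₀ *
      (∏ i : Fin t, (1 - (X (Fin.castLE ht.le i) - C (ω i)) ^ (Fintype.card F - 1))) *
      (∏ j : Fin s, (X (⟨t, ht⟩ : Fin m) - C (ω' j)))) ≠ 0 ↔
    (∀ i, a (Fin.castLE ht.le i) = ω i) ∧ ∀ j, a ⟨t, ht⟩ ≠ ω' j := by
  have hn : Fintype.card F - 1 ≠ 0 := by
    have := Fintype.one_lt_card (α := F)
    omega
  have key : ∀ x : F, 1 - x ^ (Fintype.card F - 1) ≠ 0 ↔ x = 0 := by
    intro x
    by_cases hx : x = 0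
    · simp [hx, hn]
    · simp [hx, FiniteField.pow_card_sub_one_eq_one x hx]
  simp only [map_mul, map_prod, eval_C, map_sub, map_pow, eval_X, map_one, mul_ne_zero_iff,
    Finset.prod_ne_zero_iff, Finset.mem_univ, true_imp_iff, key, sub_ne_zero, sub_eq_zero]
  simp [hω₀]

/-- The number of points with first `t` coordinates prescribed and the next coordinate avoiding `s`
given distinct values. -/
theorem card_box (F : Type) [Fintype F] [DecidableEq F] (m t s : ℕ) (ht : t < m)
    (ω : Fin t → F) (ω' : Fin s → F) (hω' : Function.Injective ω') :
    #{a : Fin m → F | (∀ i, a (Fin.castLE ht.le i) = ω i) ∧ ∀ j, a ⟨t, ht⟩ ≠ ω' j} =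
      (Fintype.card F - s) * Fintype.card F ^ (m - t - 1) := by
  let B : Fin m → Finset F := fun k =>
    if h : k.val < t then {ω ⟨k.val, h⟩} else if k.val = t then (univ.image ω')ᶜ else univ
  have hB : ({a : Fin m → F | (∀ i, a (Fin.castLE ht.le i) = ω i) ∧ ∀ j, a ⟨t, ht⟩ ≠ ω' j} :
      Finset _) = Fintype.piFinset B := by
    ext a
    simp only [Finset.mem_filter, Finset.mem_univ, true_and, Fintype.mem_piFinset]
    constructor
    · rintro ⟨h1, h2⟩ k
      simp only [B]
      split_ifs with h h'
      · rw [Finset.mem_singleton]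
        exact h1 ⟨k.val, h⟩
      · obtain rfl : k = ⟨t, ht⟩ := Fin.ext h'
        simpa [eq_comm] using h2
      · exact Finset.mem_univ _
    · intro h
      refine ⟨fun i => ?_, fun j hj => ?_⟩
      · have := h (Fin.castLE ht.le i)
        simpa [B] using this
      · have := h ⟨t, ht⟩
        simp [B, hj] at this
  have hcard : ∀ k : Fin m, #(B k) = (fun k : ℕ => if k < t then 1 else if k = t then
      Fintype.card F - s else Fintype.card F) k.val := by
    intro k
    simp only [B]
    split_ifs
    · simp
    · rw [Finset.card_compl, Finset.card_image_of_injective _ hω', Finset.card_univ,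
        Fintype.card_fin]
    · exact Finset.card_univ
  rw [hB, Fintype.card_piFinset, Finset.prod_congr rfl fun k _ => hcard k,
    Fin.prod_univ_eq_prod_range (fun k : ℕ => if k < t then 1 else if k = t then
      Fintype.card F - s else Fintype.card F) m]
  obtain ⟨n, rfl⟩ : ∃ n, m = t + 1 + n := ⟨m - t - 1, by omega⟩
  have e : t + 1 + n - t - 1 = n := by omega
  rw [e, Finset.prod_range_add, Finset.prod_range_succ,
    Finset.prod_eq_one fun k hk => if_pos (Finset.mem_range.mp hk)]
  have hrest : ∀ k ∈ range n, (if t + 1 + k < t then 1 else if t + 1 + k = t then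
      Fintype.card F - s else Fintype.card F) = Fintype.card F := fun k _ => by
    rw [if_neg (by omega), if_neg (by omega)]
  rw [Finset.prod_congr rfl hrest]
  simp

/-- for `r < m(q−1)`, `r = t(q−1)+s` with `0 ≤ s ≤ q−2` (so `t ≤ m−1`),
`ω₀ ≠ 0`, and distinct `ω'_1,…,ω'_s`, the polynomial
`f = ω₀ · Π_{i=1}^{t} (1 − (X_i − ω_i)^{q−1}) · Π_{j=1}^{s} (X_{t+1} − ω'_j)`
lies in `V_q(r,m)` and `Ev f` has weight exactly `(q−s)·q^{m−t−1}`; in particular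
`Ev f` is a minimum weight codeword of `RM_q(r,m)`. -/
theorem stmt_7 (F : Type) [Field F] [Fintype F] (q : ℕ) (hq : q = Fintype.card F)
    (m r t s : ℕ) (hm : 1 ≤ m) (hr : r < m * (q - 1))
    (hts : r = t * (q - 1) + s) (hs : s ≤ q - 2) (ht : t < m)
    (ω₀ : F) (hω₀ : ω₀ ≠ 0) (ω : Fin t → F) (ω' : Fin s → F)
    (hω' : Function.Injective ω')
    (f : MvPolynomial (Fin m) F)
    (hf : f = C ω₀ *
      (∏ i : Fin t, (1 - (X (Fin.castLE ht.le i) - C (ω i)) ^ (q - 1))) *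
      (∏ j : Fin s, (X (⟨t, ht⟩ : Fin m) - C (ω' j)))) :
    f ∈ Vq F r m ∧ wt (Ev F m f) = (q - s) * q ^ (m - t - 1) ∧
      Ev F m f ≠ 0 ∧ wt (Ev F m f) = minDist (RM F r m) := by
  subst hq
  classical
  have hcard := Fintype.one_lt_card (α := F)
  have hmem : f ∈ Vq F r m := by
    rw [hf, hts]
    exact mem_Vq_of_form F m t s (by omega) ht ω₀ ω ω'
  have hwt : wt (Ev F m f) = (Fintype.card F - s) * Fintype.card F ^ (m - t - 1) := by
    rw [wt_Ev, ← card_box F m t s ht ω ω' hω']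
    congr 1
    ext a
    simp only [Finset.mem_filter, Finset.mem_univ, true_and]
    rw [hf]
    exact eval_ne_zero_iff F m t s ht ω₀ hω₀ ω ω' a
  have hne : Ev F m f ≠ 0 := by
    intro h
    have hpos : 0 < (Fintype.card F - s) * Fintype.card F ^ (m - t - 1) :=
      Nat.mul_pos (by omega) (pow_pos (by omega) _)
    rw [← hwt, h] at hpos
    simp [wt] at hpos
  have hin : wt (Ev F m f) ∈ {w | ∃ c ∈ RM F r m, c ≠ 0 ∧ wt c = w} :=
    ⟨_, Submodule.mem_map_of_mem hmem, hne, rfl⟩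
  refine ⟨hmem, hwt, hne, le_antisymm ?_ (Nat.sInf_le hin)⟩
  obtain ⟨c, ⟨g, hg, rfl⟩, hc0, hcw⟩ := Nat.sInf_mem ⟨_, hin⟩
  rw [minDist, ← hcw, hwt]
  exact wt_lower F m r t s hts (by omega) ht g hg (fun h => hc0 (by rw [h, map_zero]))

end
end

section
/- Let m, r be integers with m ≥ 1 and 0 ≤ r ≤ m(q−1), and let t, s be the unique nonnegative integers with r = t(q−1) + s and 0 ≤ s ≤ q−2. Then every minimum weight codeword c of RM_q(r,m) has the following form: there exist homogeneous linear forms L_1, …, L_t (and additionally L_{t+1} when s ≥ 1) in F_q[X_1,…,X_m] that are linearly independent over F_q, elements ω_0, ω_1, …, ω_t ∈ F_q with ω_0 ≠ 0, and distinct elements ω'_1, …, ω'_s of F_q, such that c_ν = g(P_ν) for all ν = 1, …, q^m, where g(X_1,…,X_m) = ω_0 · Π_{i=1}^{t} (1 − (L_i − ω_i)^{q−1}) · Π_{j=1}^{s} (L_{t+1} − ω'_j). -/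
/-!
The code is treated without coordinates: `affFun F V ^ r` is the space of functions of degree at
most `r` on a finite-dimensional space `V`, and it is stable under restriction to hyperplanes.

Let `f ≠ 0` have degree at most `r = t (q - 1) + s` on a space of dimension `n`, and let `L ≠ 0` be a
linear form. If `f` vanishes on exactly `k` of the `q` hyperplanes `L = a`, then `k` linear factors
split off (`exists_factor`), so the other slices of `f` have degree at most `r - k`. Induction on `n`
gives the lower bound `(q - s) q ^ (n - t - 1)` for the weight (`wtBound`), and in the case of
equality `k` is `0`, `s` or `q - 1`, with equal slices in the first two cases
(`IsMinWt.trichotomy`).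

Let `f` attain the bound, with support `S`. If `k` were `0` for all `L`, every hyperplane would meet
`S` in `|S| / q` points, and double counting would make `S` the whole space
(`eq_empty_of_equidistributed`); so for `r ≥ 1` some hyperplane misses `S`. For `t ≥ 1` it follows
that `S` lies in a hyperplane (`IsMinWt.exists_hyperplane`): if `k = s`, a nonzero slice lies by
induction in a codimension 2 flat `A`, and a hyperplane through `A` and a further point of `S`
contains more than `|S| / (q - s)` points of `S`, which forces its parallel class to have `k = q - 1`.
Restriction to that hyperplane lowers `t` by one and contributes a factor `1 - (L - a) ^ (q - 1)`.
For `t = 0` the only possibility is `k = s`, and splitting off `s` factors leaves a constant.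

The bound is attained by a product of linear factors in separated variables (`exists_min_word`), so
it is the minimum distance of the code.
-/


open MvPolynomial Finset

noncomputable section

section Helpers

/-! ### Functions of bounded degree on a vector space -/

variable {F : Type} [Field F]

/-- The space of affine functions `V → F`, inside the algebra of all functions `V → F`.
Its power `affFun F V ^ r` consists of the functions that are given by polynomials of
degree at most `r`. -/
def affFun (F : Type) [Field F] (V : Type) [AddCommGroup V] [Module F V] :
    Submodule F (V → F) where
  carrier := {f | ∃ (l : Module.Dual F V) (c : F), ∀ x, f x = l x + c}
  add_mem' := by
    rintro f g ⟨l, c, h⟩ ⟨l', c', h'⟩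
    exact ⟨l + l', c + c', fun x => by simp [h, h']; ring⟩
  zero_mem' := ⟨0, 0, fun x => by simp⟩
  smul_mem' := by
    rintro a f ⟨l, c, h⟩
    exact ⟨a • l, a * c, fun x => by simp [h]; ring⟩

variable {V : Type} [AddCommGroup V] [Module F V]
variable {W : Type} [AddCommGroup W] [Module F W]

lemma one_le_affFun : 1 ≤ affFun F V := by
  rw [Submodule.one_le]
  exact ⟨0, 1, fun x => by simp⟩

lemma affFun_pow_mono {a b : ℕ} (h : a ≤ b) : affFun F V ^ a ≤ affFun F V ^ b :=
  pow_le_pow_right' one_le_affFun h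

lemma mem_affFun_pow_zero {f : V → F} (h : f ∈ affFun F V ^ 0) : ∃ c, ∀ x, f x = c := by
  rw [pow_zero, Submodule.mem_one] at h
  obtain ⟨c, rfl⟩ := h
  exact ⟨c, fun x => rfl⟩

lemma comp_affine_mem (T : V →ₗ[F] W) (w : W) (r : ℕ) :
    ∀ f ∈ affFun F W ^ r, (fun x => f (T x + w)) ∈ affFun F V ^ r := by
  induction r with
  | zero =>
    intro f hf
    obtain ⟨c, hc⟩ := mem_affFun_pow_zero hf
    rw [pow_zero, Submodule.mem_one]
    exact ⟨c, by funext x; simp [hc]⟩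
  | succ r ih =>
    intro f hf
    rw [pow_succ'] at hf ⊢
    refine Submodule.mul_induction_on hf ?_ ?_
    · rintro l ⟨l', c, hl⟩ g hg
      refine Submodule.mul_mem_mul (m := fun x => l (T x + w)) (n := fun x => g (T x + w)) ?_
        (ih g hg)
      exact ⟨l'.comp T, l' w + c, fun x => by simp [hl]; ring⟩
    · intro g h hg hh
      exact Submodule.add_mem _ hg hh

/-- The difference between `f` and its composition with the projection along `v` onto the
hyperplane `L = a` is divisible by `L - a`. -/
lemma sub_proj_eq_mul (L : Module.Dual F V) (v : V) (a : F) (r : ℕ) :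
    ∀ f ∈ affFun F V ^ (r + 1), ∃ g ∈ affFun F V ^ r,
      ∀ x, f x - f (x - (L x - a) • v) = (L x - a) * g x := by
  have aux : ∀ f ∈ affFun F V, ∃ c : F, ∀ x, f x - f (x - (L x - a) • v) = (L x - a) * c := by
    rintro f ⟨l, c, h⟩
    exact ⟨l v, fun x => by simp [h]⟩
  induction r with
  | zero =>
    intro f hf
    rw [zero_add, pow_one] at hf
    obtain ⟨c, hc⟩ := aux f hf
    refine ⟨fun _ => c, ?_, hc⟩
    rw [pow_zero, Submodule.mem_one]
    exact ⟨c, rfl⟩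
  | succ r ih =>
    intro f hf
    rw [pow_succ'] at hf
    refine Submodule.mul_induction_on hf ?_ ?_
    · intro l hl h hh
      obtain ⟨g, hg, hgx⟩ := ih h hh
      obtain ⟨c, hc⟩ := aux l hl
      have hp : (fun x => h (x - (L x - a) • v)) ∈ affFun F V ^ (r + 1) := by
        have := comp_affine_mem (LinearMap.id - L.smulRight v) (a • v) (r + 1) h hh
        convert this using 3
        simp [sub_smul]; abel
      refine ⟨l * g + c • (fun x => h (x - (L x - a) • v)), ?_, ?_⟩
      · refine Submodule.add_mem _ ?_ (Submodule.smul_mem _ _ hp)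
        rw [pow_succ']
        exact Submodule.mul_mem_mul hl hg
      · intro x
        simp only [Pi.mul_apply, Pi.add_apply, Pi.smul_apply, smul_eq_mul]
        linear_combination l x * hgx x + h (x - (L x - a) • v) * hc x
    · rintro f₁ f₂ ⟨g₁, h₁, e₁⟩ ⟨g₂, h₂, e₂⟩
      refine ⟨g₁ + g₂, Submodule.add_mem _ h₁ h₂, fun x => ?_⟩
      simp only [Pi.add_apply]
      linear_combination e₁ x + e₂ x

/-- A nonzero function of degree at most `r` that vanishes on the parallel hyperplanes
`L = a`, `a ∈ K`, is divisible by `∏ a ∈ K, (L - a)`. -/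
lemma exists_factor (L : Module.Dual F V) {v : V} (hv : L v = 1) (K : Finset F) :
    ∀ (r : ℕ) (f : V → F), f ∈ affFun F V ^ r → f ≠ 0 → (∀ x, L x ∈ K → f x = 0) →
      K.card ≤ r ∧ ∃ g ∈ affFun F V ^ (r - K.card), ∀ x, f x = (∏ a ∈ K, (L x - a)) * g x := by
  classical
  induction K using Finset.induction_on with
  | empty => intro r f hf _ _; exact ⟨by simp, f, by simpa using hf, by simp⟩
  | insert a K ha ih =>
    intro r f hf hf0 hK
    have hproj : ∀ x, f (x - (L x - a) • v) = 0 := fun x => hK _ (by simp [hv])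
    obtain _ | r := r
    · obtain ⟨c, hc⟩ := mem_affFun_pow_zero hf
      exact absurd (_root_.funext fun x => by rw [hc x, ← hc, hproj x]; rfl) hf0
    · obtain ⟨g, hg, hgx⟩ := sub_proj_eq_mul L v a r f hf
      have hfg : ∀ x, f x = (L x - a) * g x := fun x => by rw [← hgx, hproj, sub_zero]
      obtain ⟨h1, g', hg', hgx'⟩ := ih r g hg
        (by rintro rfl; exact hf0 (_root_.funext fun x => by simp [hfg]))
        (by
          intro x hx
          have := hK x (Finset.mem_insert_of_mem hx)
          rw [hfg] at this
          refine (mul_eq_zero.1 this).resolve_left (sub_ne_zero.2 ?_)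
          rintro rfl
          exact ha hx)
      rw [Finset.card_insert_of_notMem ha]
      refine ⟨by omega, g', by simpa [Nat.add_sub_add_right] using hg', fun x => ?_⟩
      rw [Finset.prod_insert ha, hfg, hgx', mul_assoc]

/-- The number of points of the support of `f` on the hyperplane `L = a`. -/
def sliceWt (L : Module.Dual F V) (f : V → F) (a : F) : ℕ :=
  Set.ncard {x | f x ≠ 0 ∧ L x = a}

/-- The set of those `a` for which `f` vanishes identically on the hyperplane `L = a`. -/
def emptySlices [Fintype F] (L : Module.Dual F V) (f : V → F) : Finset F := by
  classical exact Finset.univ.filter (fun a => ∀ x, L x = a → f x = 0)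

lemma mem_emptySlices [Fintype F] {L : Module.Dual F V} {f : V → F} {a : F} :
    a ∈ emptySlices L f ↔ ∀ x, L x = a → f x = 0 := by
  simp [emptySlices]

/-- A hyperplane `L = a` is parametrized by the kernel of `L`. -/
lemma wt_slice (L : Module.Dual F V) {v : V} (hv : L v = 1) (f : V → F) (a : F) :
    wt (fun x : LinearMap.ker L => f (x + a • v)) = sliceWt L f a := by
  unfold wt sliceWt
  refine Set.ncard_congr (fun x _ => (x : V) + a • v) ?_ ?_ ?_
  · intro x hx
    exact ⟨hx, by simp [hv]⟩
  · intro x y _ _ h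
    exact Subtype.ext (add_right_cancel h)
  · rintro y ⟨hy, hy'⟩
    refine ⟨⟨y - a • v, by simp [hv, hy']⟩, ?_, by simp⟩
    simpa using hy

lemma sum_sliceWt [Fintype F] [DecidableEq F] [Finite V] (L : Module.Dual F V) (f : V → F) :
    wt f = ∑ a ∈ univ \ emptySlices L f, sliceWt L f a := by
  classical
  have := Fintype.ofFinite V
  have h1 : wt f = ∑ a : F, sliceWt L f a := by
    unfold wt sliceWt
    simp only [Set.ncard_eq_toFinset_card']
    rw [Finset.card_eq_sum_card_fiberwise (f := L) (t := Finset.univ) (by simp)]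
    refine Finset.sum_congr rfl fun a _ => congrArg _ ?_
    ext x; simp
  rw [h1]
  symm
  refine Finset.sum_subset (Finset.subset_univ _) ?_
  intro a _ ha
  have ha' : a ∈ emptySlices L f := by simpa using ha
  rw [mem_emptySlices] at ha'
  unfold sliceWt
  rw [show {x | f x ≠ 0 ∧ L x = a} = ∅ from by
    ext x; simp only [Set.mem_ofPred_eq, Set.mem_empty_iff_false, iff_false]
    exact fun h => h.1 (ha' x h.2)]
  simp

lemma exists_dual_eq_one {L : Module.Dual F V} (hL : L ≠ 0) : ∃ v, L v = 1 := by
  obtain ⟨w, hw⟩ : ∃ w, L w ≠ 0 := by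
    by_contra! h
    exact hL (LinearMap.ext h)
  exact ⟨(L w)⁻¹ • w, by simp [hw]⟩

lemma finrank_ker_add_one [FiniteDimensional F V] {L : Module.Dual F V} (hL : L ≠ 0) :
    Module.finrank F (LinearMap.ker L) + 1 = Module.finrank F V :=
  Module.Dual.finrank_ker_add_one_of_ne_zero hL

lemma wt_pos {α : Type} [Finite α] {f : α → F} (hf : f ≠ 0) : 0 < wt f := by
  unfold wt
  rw [Set.ncard_pos]
  exact Function.support_nonempty_iff.2 hf

/-- The restriction of `f` to a hyperplane on which it does not vanish has lower degree: each
parallel hyperplane on which `f` vanishes accounts for one linear factor. -/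
lemma slice_mem [Fintype F] {L : Module.Dual F V} {v : V} (hv : L v = 1) {r : ℕ} {f : V → F}
    (hf : f ∈ affFun F V ^ r) {a : F} (ha : a ∉ emptySlices L f) :
    (emptySlices L f).card ≤ r ∧
    (fun x : LinearMap.ker L => f (x + a • v)) ∈
      affFun F (LinearMap.ker L) ^ (r - (emptySlices L f).card) ∧
    (fun x : LinearMap.ker L => f (x + a • v)) ≠ 0 := by
  have hne : ∃ x, L x = a ∧ f x ≠ 0 := by
    by_contra! h
    exact ha (mem_emptySlices.2 h)
  obtain ⟨x, hx, hfx⟩ := hne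
  obtain ⟨h1, g, hg, hgx⟩ := exists_factor L hv (emptySlices L f) r f hf
    (by rintro rfl; exact hfx rfl) (fun x hx => mem_emptySlices.1 hx x rfl)
  refine ⟨h1, ?_, ?_⟩
  · have h2 := comp_affine_mem (LinearMap.ker L).subtype (a • v) _ g hg
    convert Submodule.smul_mem _ (∏ b ∈ emptySlices L f, (a - b)) h2 using 1
    funext y
    simp [hgx, hv]
  · intro h
    have := congrFun h ⟨x - a • v, by simp [hv, hx]⟩
    simp at this
    exact hfx this

/-! ### The lower bound for the weight -/

lemma slack_le (q s k : ℕ) (hs : s ≤ q) (hk : k ≤ s) :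
    (q - k) * (q - s + k) = (q - s) * q + k * (s - k) := by
  obtain ⟨j, rfl⟩ := Nat.exists_eq_add_of_le hk
  obtain ⟨e, rfl⟩ := Nat.exists_eq_add_of_le hs
  rw [show k + j + e - k = j + e by omega, show k + j + e - (k + j) = e by omega,
    show k + j - k = j by omega]
  ring

lemma slack_gt (q s k : ℕ) (hs : s < k) (hk : k < q) :
    (q - k) * (1 + k - s) = (q - s) + (k - s) * (q - 1 - k) := by
  obtain ⟨j, rfl⟩ := Nat.exists_eq_add_of_lt hs
  obtain ⟨e, rfl⟩ := Nat.exists_eq_add_of_lt hk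
  rw [show s + j + 1 + e + 1 - (s + j + 1) = e + 1 by omega,
    show 1 + (s + j + 1) - s = j + 2 by omega, show s + j + 1 + e + 1 - s = j + e + 2 by omega,
    show s + j + 1 - s = j + 1 by omega, show s + j + 1 + e + 1 - 1 - (s + j + 1) = e by omega]
  ring

/-- The lower bound `(q - s) q^(n - t - 1)` for the weight of a nonzero function of degree at most
`t (q - 1) + s` on an `n`-dimensional space, with denominators cleared. It is a predicate so
that it can serve as an induction hypothesis. -/
def WtBound (F : Type) [Field F] [Fintype F] (V : Type) [AddCommGroup V] [Module F V] : Prop :=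
  ∀ (t s : ℕ) (f : V → F), s ≤ Fintype.card F - 2 →
    f ∈ affFun F V ^ (t * (Fintype.card F - 1) + s) → f ≠ 0 →
    (Fintype.card F - s) * Fintype.card F ^ Module.finrank F V ≤ Fintype.card F ^ (t + 1) * wt f

/-- The bound for the kernel of `L`, applied to a nonzero slice of `f`; here `k` is the number of
hyperplanes parallel to the slice on which `f` vanishes. -/
lemma sliceWt_bound [Fintype F] {L : Module.Dual F V} (hL : L ≠ 0)
    (hB : WtBound F (LinearMap.ker L)) {t s k : ℕ} {f : V → F} (hs : s ≤ Fintype.card F - 2)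
    (hf : f ∈ affFun F V ^ (t * (Fintype.card F - 1) + s)) (hk : (emptySlices L f).card = k)
    {a : F} (ha : a ∉ emptySlices L f) :
    (k ≤ s → (Fintype.card F - s + k) * Fintype.card F ^ Module.finrank F (LinearMap.ker L) ≤
      Fintype.card F ^ (t + 1) * sliceWt L f a) ∧
    (s < k → (1 + k - s) * Fintype.card F ^ Module.finrank F (LinearMap.ker L) ≤
      Fintype.card F ^ t * sliceWt L f a) := by
  obtain ⟨v, hv⟩ := exists_dual_eq_one hL
  obtain ⟨h1, h2, h3⟩ := slice_mem hv hf ha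
  rw [hk] at h1 h2
  have hkq : k < Fintype.card F := by
    rw [← hk]
    exact Finset.card_lt_univ_of_notMem ha
  have hq : 1 < Fintype.card F := Fintype.one_lt_card
  rw [← wt_slice L hv]
  constructor
  · intro hks
    have := hB t (s - k) _ (by omega) (by rwa [← Nat.add_sub_assoc hks]) h3
    rwa [show Fintype.card F - (s - k) = Fintype.card F - s + k by omega] at this
  · intro hks
    obtain _ | t := t
    · omega
    have := hB t (Fintype.card F - 1 + s - k) _ (by omega) (by
      convert h2 using 2
      rw [Nat.succ_mul]
      omega) h3
    rwa [show Fintype.card F - (Fintype.card F - 1 + s - k) = 1 + k - s by omega] at this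

lemma card_nonempty_slices [Fintype F] [DecidableEq F] (L : Module.Dual F V) (f : V → F) :
    (univ \ emptySlices L f).card = Fintype.card F - (emptySlices L f).card := by
  rw [Finset.card_sdiff_of_subset (Finset.subset_univ _), Finset.card_univ]

lemma emptySlices_card_lt [Fintype F] (L : Module.Dual F V) {f : V → F} (hf0 : f ≠ 0) :
    (emptySlices L f).card < Fintype.card F := by
  obtain ⟨x, hx⟩ := Function.ne_iff.1 hf0
  exact Finset.card_lt_univ_of_notMem (x := L x) fun h => hx (mem_emptySlices.1 h x rfl)

/-- The slice bounds summed over all nonzero slices. -/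
lemma wt_bound_of_slices [Fintype F] [Finite V] {L : Module.Dual F V} (hL : L ≠ 0)
    (hB : WtBound F (LinearMap.ker L)) {t s k : ℕ} {f : V → F} (hs : s ≤ Fintype.card F - 2)
    (hf : f ∈ affFun F V ^ (t * (Fintype.card F - 1) + s)) (hk : (emptySlices L f).card = k) :
    (k ≤ s → ((Fintype.card F - k) * (Fintype.card F - s + k)) *
      Fintype.card F ^ Module.finrank F (LinearMap.ker L) ≤ Fintype.card F ^ (t + 1) * wt f) ∧
    (s < k → ((Fintype.card F - k) * (1 + k - s)) *
      Fintype.card F ^ Module.finrank F (LinearMap.ker L) ≤ Fintype.card F ^ t * wt f) := by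
  classical
  have hc := card_nonempty_slices L f
  rw [hk] at hc
  rw [sum_sliceWt L f, Finset.mul_sum, Finset.mul_sum, ← hc, mul_assoc, mul_assoc]
  constructor
  · intro hks
    rw [← smul_eq_mul (α := ℕ) #_]
    refine Finset.card_nsmul_le_sum _ _ _ fun a ha => ?_
    exact (sliceWt_bound hL hB hs hf hk (by simpa using ha)).1 hks
  · intro hks
    rw [← smul_eq_mul (α := ℕ) #_]
    refine Finset.card_nsmul_le_sum _ _ _ fun a ha => ?_
    exact (sliceWt_bound hL hB hs hf hk (by simpa using ha)).2 hks

theorem wtBound [Fintype F] : ∀ (n : ℕ) (V : Type) [AddCommGroup V] [Module F V]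
    [FiniteDimensional F V], Module.finrank F V = n → WtBound F V := by
  intro n
  induction n with
  | zero =>
    intro V _ _ _ hn t s f hs hf hf0
    have : Finite V := Module.finite_of_finite F
    have h1 := wt_pos hf0
    rw [hn, pow_zero, mul_one]
    calc Fintype.card F - s ≤ Fintype.card F ^ 1 := by simp
      _ ≤ Fintype.card F ^ (t + 1) := Nat.pow_le_pow_right Fintype.card_pos (by omega)
      _ ≤ _ := Nat.le_mul_of_pos_right _ h1
  | succ n ih =>
    intro V _ _ _ hn t s f hs hf hf0
    have : Finite V := Module.finite_of_finite F
    have : Nontrivial V := Module.nontrivial_of_finrank_pos (R := F) (by omega)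
    obtain ⟨L, hL⟩ := exists_ne (0 : Module.Dual F V)
    have hker := finrank_ker_add_one hL
    have hB := ih (LinearMap.ker L) (by omega)
    obtain ⟨h1, h2⟩ := wt_bound_of_slices hL hB hs hf rfl
    have hkq := emptySlices_card_lt L hf0
    rw [← hker]
    obtain hks | hks := le_or_gt (emptySlices L f).card s
    · refine le_trans ?_ (h1 hks)
      rw [slack_le _ _ _ (by omega) hks, pow_succ, mul_comm (_ ^ _), ← mul_assoc]
      gcongr
      omega
    · have h2 := h2 hks
      rw [slack_gt _ _ _ hks hkq] at h2
      rw [pow_succ _ t, pow_succ, mul_right_comm _ (Fintype.card F) (wt f), ← mul_assoc]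
      refine Nat.mul_le_mul_right _ (le_trans (Nat.mul_le_mul_right _ ?_) h2)
      omega

/-! ### Slices of minimum weight functions -/

/-- `f` has degree at most `t (q - 1) + s` and attains the lower bound for the weight. -/
structure IsMinWt [Fintype F] (t s : ℕ) (f : V → F) : Prop where
  hs : s ≤ Fintype.card F - 2
  mem : f ∈ affFun F V ^ (t * (Fintype.card F - 1) + s)
  ne : f ≠ 0
  wt_eq : (Fintype.card F - s) * Fintype.card F ^ Module.finrank F V =
    Fintype.card F ^ (t + 1) * wt f

/-- In the equality case `f` vanishes on none, on `s`, or on all but one of the members of a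
parallel class of hyperplanes, and in the first two cases its support is equidistributed
over the remaining members. -/
lemma IsMinWt.trichotomy [Fintype F] [FiniteDimensional F V] {t s : ℕ} {f : V → F}
    (h : IsMinWt t s f) {L : Module.Dual F V} (hL : L ≠ 0) :
    (((emptySlices L f).card = 0 ∨ (emptySlices L f).card = s) ∧ ∀ a ∉ emptySlices L f,
      (Fintype.card F - (emptySlices L f).card) * sliceWt L f a = wt f) ∨
    (emptySlices L f).card = Fintype.card F - 1 := by
  classical
  have : Finite V := Module.finite_of_finite F
  have hker := finrank_ker_add_one hL
  have hB := wtBound (F := F) _ (LinearMap.ker L) rfl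
  have hkq := emptySlices_card_lt L h.ne
  obtain ⟨h1, h2⟩ := wt_bound_of_slices hL hB h.hs h.mem rfl
  have hq : 0 < Fintype.card F := Fintype.card_pos
  have hs := h.hs
  have heq := h.wt_eq
  rw [← hker, pow_succ] at heq
  obtain hks | hks := le_or_gt (emptySlices L f).card s
  · left
    have h1 := h1 hks
    rw [← heq, mul_comm (_ ^ _), ← mul_assoc] at h1
    have h3 := Nat.le_of_mul_le_mul_right h1 (by positivity)
    have hsl := slack_le (Fintype.card F) s _ (by omega) hks
    have h4 : (emptySlices L f).card * (s - (emptySlices L f).card) = 0 := by omega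
    refine ⟨by rcases Nat.mul_eq_zero.1 h4 with h | h <;> omega, fun a ha => ?_⟩
    -- Each slice is at least as large as the average, hence equal to it.
    have hlow : ∀ b ∈ univ \ emptySlices L f,
        (Fintype.card F - s + (emptySlices L f).card) *
          Fintype.card F ^ Module.finrank F (LinearMap.ker L) ≤
        Fintype.card F ^ (t + 1) * sliceWt L f b := fun b hb =>
      (sliceWt_bound hL hB h.hs h.mem rfl (by simpa using hb)).1 hks
    have hsum : ∑ b ∈ univ \ emptySlices L f, (Fintype.card F - s + (emptySlices L f).card) *
          Fintype.card F ^ Module.finrank F (LinearMap.ker L) =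
        ∑ b ∈ univ \ emptySlices L f, Fintype.card F ^ (t + 1) * sliceWt L f b := by
      rw [← Finset.mul_sum (f := sliceWt L f), ← sum_sliceWt, ← heq, Finset.sum_const,
        card_nonempty_slices, smul_eq_mul, ← mul_assoc, hsl, h4, add_zero, mul_assoc, mul_comm (Fintype.card F)]
    have h5 := (Finset.sum_eq_sum_iff_of_le hlow).1 hsum a (by simpa using ha)
    have hpos : 0 < Fintype.card F ^ (t + 1) := by positivity
    apply Nat.eq_of_mul_eq_mul_left hpos
    rw [← heq, mul_left_comm, ← h5, ← mul_assoc, hsl, h4, add_zero, mul_assoc,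
      mul_comm (Fintype.card F)]
  · right
    have h2 := h2 hks
    rw [pow_succ _ t, mul_right_comm, ← mul_assoc] at heq
    rw [← Nat.eq_of_mul_eq_mul_right hq heq] at h2
    have h3 := Nat.le_of_mul_le_mul_right h2 (by positivity)
    rw [slack_gt _ _ _ hks hkq] at h3
    have h4 : ((emptySlices L f).card - s) *
      (Fintype.card F - 1 - (emptySlices L f).card) = 0 := by omega
    rcases Nat.mul_eq_zero.1 h4 with h | h <;> omega

/-- A set meeting every hyperplane in the expected number `|S| / q` of points is empty or the
whole space: double counting of pairs `(L, y)` with `y ∈ S` and `L y = L p`, for a point `p`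
outside `S`. -/
lemma eq_empty_of_equidistributed [Fintype F] [FiniteDimensional F V] {f : V → F}
    (h : ∀ L : Module.Dual F V, L ≠ 0 → ∀ a, Fintype.card F * sliceWt L f a = wt f)
    {p : V} (hp : f p = 0) : wt f = 0 := by
  classical
  have : Finite V := Module.finite_of_finite F
  have : Finite (Module.Dual F V) := Module.finite_of_finite F
  have := Fintype.ofFinite V
  have := Fintype.ofFinite (Module.Dual F V)
  set S : Finset V := Finset.univ.filter (fun x => f x ≠ 0) with hS
  have hwt : wt f = S.card := by
    unfold wt
    rw [Set.ncard_eq_toFinset_card']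
    congr 1
    ext x; simp [hS]
  have hsl : ∀ L : Module.Dual F V, sliceWt L f (L p) = (S.filter (fun y => L y = L p)).card := by
    intro L
    unfold sliceWt
    rw [Set.ncard_eq_toFinset_card']
    congr 1
    ext x; simp [hS]
  have hcount : ∀ y ∈ S, Fintype.card F *
      (Finset.univ.filter (fun L : Module.Dual F V => L y = L p)).card =
        Fintype.card (Module.Dual F V) := by
    intro y hy
    have hyp : y - p ≠ 0 := by
      intro h0
      rw [sub_eq_zero] at h0
      simp [hS, h0, hp] at hy
    have hev : Module.Dual.eval F V (y - p) ≠ 0 := by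
      intro h0
      exact hyp ((Module.forall_dual_apply_eq_zero_iff F _).1 fun φ => LinearMap.congr_fun h0 φ)
    have h1 := finrank_ker_add_one hev
    rw [Module.card_eq_pow_finrank (K := F) (V := Module.Dual F V), ← h1, pow_succ',
      ← Module.card_eq_pow_finrank (K := F)
        (V := LinearMap.ker (Module.Dual.eval F V (y - p)))]
    congr 1
    rw [Fintype.card_subtype]
    congr 1
    ext L
    simp [sub_eq_zero]
  have hdouble : ∑ L : Module.Dual F V, (S.filter (fun y => L y = L p)).card =
      ∑ y ∈ S, (Finset.univ.filter (fun L : Module.Dual F V => L y = L p)).card := by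
    have := Finset.sum_card_bipartiteAbove_eq_sum_card_bipartiteBelow
      (s := (Finset.univ : Finset (Module.Dual F V))) (t := S) (fun L y => L y = L p)
    simpa [Finset.bipartiteAbove, Finset.bipartiteBelow] using this
  have hR : Fintype.card F * ∑ y ∈ S,
      (Finset.univ.filter (fun L : Module.Dual F V => L y = L p)).card =
        S.card * Fintype.card (Module.Dual F V) := by
    rw [Finset.mul_sum, Finset.sum_congr rfl hcount, Finset.sum_const, smul_eq_mul]
  have hLft : Fintype.card F * ∑ L : Module.Dual F V, (S.filter (fun y => L y = L p)).card =
      Fintype.card F * S.card + (Fintype.card (Module.Dual F V) - 1) * S.card := by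
    rw [Finset.mul_sum, ← Finset.add_sum_erase _ _ (Finset.mem_univ (0 : Module.Dual F V))]
    congr 1
    · simp
    · rw [Finset.sum_congr rfl (g := fun _ => S.card), Finset.sum_const, smul_eq_mul,
        Finset.card_erase_of_mem (Finset.mem_univ _), Finset.card_univ]
      intro L hL
      rw [← hsl, ← hwt]
      exact h L (Finset.ne_of_mem_erase hL) _
  rw [hdouble, hR] at hLft
  have hD : 0 < Fintype.card (Module.Dual F V) := Fintype.card_pos
  have hq : 1 < Fintype.card F := Fintype.one_lt_card
  obtain ⟨D, hD'⟩ := Nat.exists_eq_add_of_lt hD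
  obtain ⟨e, he⟩ := Nat.exists_eq_add_of_lt hq
  rw [hwt]
  rw [hD', he, show 0 + D + 1 - 1 = D by omega] at hLft
  nlinarith

lemma IsMinWt.exists_empty_slice [Fintype F] [FiniteDimensional F V] {t s : ℕ} {f : V → F}
    (h : IsMinWt t s f) (hr : 0 < t ∨ 0 < s) :
    ∃ L : Module.Dual F V, L ≠ 0 ∧ 0 < (emptySlices L f).card := by
  classical
  have : Finite V := Module.finite_of_finite F
  by_contra! hcon
  have hq : 1 < Fintype.card F := Fintype.one_lt_card
  have hwt := wt_pos h.ne
  obtain ⟨p, hp⟩ : ∃ p, f p = 0 := by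
    by_contra! hall
    have hfull : wt f = Fintype.card F ^ Module.finrank F V := by
      have := Fintype.ofFinite V
      unfold wt
      rw [← Module.card_eq_pow_finrank (K := F) (V := V), ← Nat.card_eq_fintype_card,
        ← Set.ncard_univ]
      congr 1
      ext x; simp [hall x]
    have heq := h.wt_eq
    rw [hfull] at heq
    have heq := Nat.eq_of_mul_eq_mul_right (by positivity) heq
    have hle : Fintype.card F ≤ Fintype.card F ^ (t + 1) := Nat.le_self_pow (by omega) _
    rcases hr with ht | hs
    · have : Fintype.card F ^ 1 < Fintype.card F ^ (t + 1) :=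
        Nat.pow_lt_pow_right hq (by omega)
      rw [pow_one] at this
      omega
    · omega
  refine hwt.ne' (eq_empty_of_equidistributed (fun L hL a => ?_) hp)
  have h0 : (emptySlices L f).card = 0 := Nat.le_zero.1 (hcon L hL)
  rcases h.trichotomy hL with ⟨-, h1⟩ | h1
  · have := h1 a (by rw [Finset.card_eq_zero.1 h0]; simp)
    rwa [h0, Nat.sub_zero] at this
  · omega

/-- The linear projection of `V` onto the kernel of `L` along `v`. -/
lemma exists_ker_proj {L : Module.Dual F V} {v : V} (hv : L v = 1) :
    ∃ π : V →ₗ[F] LinearMap.ker L, (∀ x, ((π x : LinearMap.ker L) : V) = x - L x • v) ∧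
      ∀ x : LinearMap.ker L, π x = x := by
  have hmem : ∀ x, (LinearMap.id - L.smulRight v : V →ₗ[F] V) x ∈ LinearMap.ker L := by simp [hv]
  refine ⟨LinearMap.codRestrict (LinearMap.ker L) (LinearMap.id - L.smulRight v) hmem,
    fun x => rfl, fun x => Subtype.ext ?_⟩
  change (x : V) - L x • v = x
  rw [LinearMap.mem_ker.1 x.2, zero_smul, sub_zero]

/-! ### Minimum weight functions are supported in a hyperplane -/

/-- For `t ≥ 1` the support of a minimum weight function lies in a hyperplane. If `f` vanishes on
exactly `s` of the hyperplanes parallel to `L = a₀`, the nonzero slice on `L = a₀` lies, by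
induction, in a hyperplane of `L = a₀`; the hyperplane of `V` through that one and through a point
`P` of the support outside `L = a₀` contains too many points of the support for its parallel
class to have more than one member meeting the support. -/
theorem IsMinWt.exists_hyperplane [Fintype F] : ∀ (n : ℕ) (V : Type) [AddCommGroup V]
    [Module F V] [FiniteDimensional F V], Module.finrank F V = n →
    ∀ (t s : ℕ) (f : V → F), 0 < t → IsMinWt t s f →
    ∃ L : Module.Dual F V, L ≠ 0 ∧ (emptySlices L f).card = Fintype.card F - 1 := by
  intro n
  induction n with
  | zero =>
    intro V _ _ _ hn t s f ht h
    obtain ⟨L, hL, -⟩ := h.exists_empty_slice (Or.inl ht)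
    have := finrank_ker_add_one hL
    omega
  | succ n ih =>
    intro V _ _ _ hn t s f ht h
    classical
    have : Finite V := Module.finite_of_finite F
    have hq : 1 < Fintype.card F := Fintype.one_lt_card
    have hs := h.hs
    have hwt := wt_pos h.ne
    obtain ⟨L, hL, hpos⟩ := h.exists_empty_slice (Or.inl ht)
    rcases h.trichotomy hL with ⟨hk, heq⟩ | hk
    swap
    · exact ⟨L, hL, hk⟩
    have hk : (emptySlices L f).card = s := by omega
    rw [hk] at heq hpos
    have hker := finrank_ker_add_one hL
    obtain ⟨v, hv⟩ := exists_dual_eq_one hL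
    have hcard : 1 < (univ \ emptySlices L f).card := by
      rw [card_nonempty_slices, hk]; omega
    obtain ⟨a₀, ha₀, a₁, ha₁, hne⟩ := Finset.one_lt_card.1 hcard
    replace ha₀ : a₀ ∉ emptySlices L f := by simpa using ha₀
    replace ha₁ : a₁ ∉ emptySlices L f := by simpa using ha₁
    obtain ⟨P, hP, hfP⟩ : ∃ P, L P = a₁ ∧ f P ≠ 0 := by
      by_contra! hall
      exact ha₁ (mem_emptySlices.2 hall)
    -- The slice on `L = a₀` is a minimum weight function with parameters `(t, 0)`.
    have hmin : IsMinWt t 0 (fun x : LinearMap.ker L => f (x + a₀ • v)) := by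
      obtain ⟨-, h2, h3⟩ := slice_mem hv h.mem ha₀
      rw [hk] at h2
      refine ⟨by omega, by simpa using h2, h3, ?_⟩
      rw [wt_slice L hv, Nat.sub_zero]
      have hsq : 0 < Fintype.card F - s := by omega
      apply Nat.eq_of_mul_eq_mul_left hsq
      rw [mul_left_comm (Fintype.card F - s) (Fintype.card F ^ (t + 1)), heq a₀ ha₀, ← h.wt_eq,
        ← hker, pow_succ']
    obtain ⟨l, hl, hlk⟩ := ih _ (by omega) t 0 _ ht hmin
    obtain ⟨β, hβ⟩ : ∃ β, ∀ x : LinearMap.ker L, f (x + a₀ • v) ≠ 0 → l x = β := by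
      have h1 := card_nonempty_slices l (fun x : LinearMap.ker L => f (x + a₀ • v))
      rw [hlk, show Fintype.card F - (Fintype.card F - 1) = 1 by omega] at h1
      obtain ⟨β, hβ⟩ := Finset.card_eq_one.1 h1
      refine ⟨β, fun x hx => ?_⟩
      rw [← Finset.mem_singleton, ← hβ]
      simp only [Finset.mem_sdiff, Finset.mem_univ, true_and]
      exact fun hmem => hx (mem_emptySlices.1 hmem x rfl)
    obtain ⟨π, hπ, hπk⟩ := exists_ker_proj hv
    set c : F := -(l (π P) - β) / (a₁ - a₀) with hc
    have ha : a₁ - a₀ ≠ 0 := sub_ne_zero.2 hne.symm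
    let M : Module.Dual F V := l.comp π + c • L
    have hMapp : ∀ x, M x = l (π x) + c * L x := fun x => rfl
    have hM : M ≠ 0 := by
      intro h0
      apply hl
      ext x
      have := hMapp x
      rw [h0, hπk, LinearMap.mem_ker.1 x.2] at this
      simpa using this.symm
    have hMP : M P = β + c * a₀ := by
      rw [hMapp, hP, hc]
      field_simp
      ring
    have hMsub : ∀ x, f x ≠ 0 → L x = a₀ → M x = β + c * a₀ := by
      intro x hx hLx
      rw [hMapp, hLx, hβ (π x)]
      rw [hπ, hLx]
      simpa using hx
    have hlt : sliceWt L f a₀ < sliceWt M f (β + c * a₀) := by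
      unfold sliceWt
      refine Set.ncard_lt_ncard ⟨fun x hx => ⟨hx.1, hMsub x hx.1 hx.2⟩, fun hsub => ?_⟩
      have : L P = a₀ := (hsub (a := P) ⟨hfP, hMP⟩).2
      exact hne (by rw [← this, hP])
    refine ⟨M, hM, ?_⟩
    rcases h.trichotomy hM with ⟨hk', heq'⟩ | hk'
    swap
    · exact hk'
    exfalso
    have h1 := heq a₀ ha₀
    have h2 := heq' (β + c * a₀) (fun hmem => hfP (mem_emptySlices.1 hmem P hMP))
    have h3 : Fintype.card F - s ≤ Fintype.card F - (emptySlices M f).card := by omega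
    have h4 : 0 < Fintype.card F - s := by omega
    have h5 : (Fintype.card F - s) * sliceWt L f a₀ <
        (Fintype.card F - s) * sliceWt M f (β + c * a₀) := Nat.mul_lt_mul_of_pos_left hlt h4
    have h6 := Nat.mul_le_mul_right (sliceWt M f (β + c * a₀)) h3
    omega

/-! ### The explicit form -/

/-- For `t = 0` a minimum weight function is a product of linear factors with parallel zero
hyperplanes. -/
lemma IsMinWt.form_zero [Fintype F] [FiniteDimensional F V] {s : ℕ} {f : V → F}
    (h : IsMinWt 0 s f) :
    ∃ (M : Module.Dual F V) (ω₀ : F) (ω' : Fin s → F), ω₀ ≠ 0 ∧ Function.Injective ω' ∧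
      (1 ≤ s → M ≠ 0) ∧ ∀ x, f x = ω₀ * ∏ k, (M x - ω' k) := by
  classical
  obtain ⟨x₀, hx₀⟩ := Function.ne_iff.1 h.ne
  have hmem := h.mem
  rw [zero_mul, zero_add] at hmem
  obtain rfl | hs0 := Nat.eq_zero_or_pos s
  · obtain ⟨c, hc⟩ := mem_affFun_pow_zero hmem
    exact ⟨0, c, Fin.elim0, by rw [← hc x₀]; exact hx₀, fun i => i.elim0, by simp, by simp [hc]⟩
  · have hq : 1 < Fintype.card F := Fintype.one_lt_card
    have hs := h.hs
    obtain ⟨L, hL, hpos⟩ := h.exists_empty_slice (Or.inr hs0)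
    obtain ⟨v, hv⟩ := exists_dual_eq_one hL
    obtain ⟨hle, g, hg, hgx⟩ := exists_factor L hv (emptySlices L f) s f hmem h.ne
      (fun x hx => mem_emptySlices.1 hx x rfl)
    have hk : (emptySlices L f).card = s := by
      rcases h.trichotomy hL with ⟨h1, -⟩ | h1 <;> omega
    rw [hk, Nat.sub_self] at hg
    obtain ⟨c, hc⟩ := mem_affFun_pow_zero hg
    let e := (emptySlices L f).equivFinOfCardEq hk
    refine ⟨L, c, fun k => (e.symm k : F), ?_, ?_, fun _ => hL, fun x => ?_⟩
    · rintro rfl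
      exact hx₀ (by simp [hgx, hc])
    · exact Subtype.val_injective.comp e.symm.injective
    · rw [hgx, hc, mul_comm, ← Finset.prod_coe_sort, ← Equiv.prod_comp e.symm]

/-- The explicit form, with linear forms as elements of the dual space. -/
theorem IsMinWt.form [Fintype F] (s : ℕ) : ∀ (t : ℕ) (V : Type) [AddCommGroup V]
    [Module F V] [FiniteDimensional F V] (f : V → F), IsMinWt t s f →
    ∃ (L : Fin (t + 1) → Module.Dual F V) (ω₀ : F) (ω : Fin t → F) (ω' : Fin s → F),
      ω₀ ≠ 0 ∧ Function.Injective ω' ∧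
      LinearIndependent F (fun i : Fin t => L i.castSucc) ∧
      (1 ≤ s → LinearIndependent F L) ∧
      ∀ x, f x = ω₀ * (∏ i : Fin t, (1 - (L i.castSucc x - ω i) ^ (Fintype.card F - 1))) *
          (∏ k : Fin s, (L (Fin.last t) x - ω' k)) := by
  intro t
  induction t with
  | zero =>
    intro V _ _ _ f h
    obtain ⟨M, ω₀, ω', h1, h2, h3, h4⟩ := h.form_zero
    refine ⟨fun _ => M, ω₀, Fin.elim0, ω', h1, h2, linearIndependent_empty_type, fun hs => ?_,
      fun x => by simp [h4]⟩
    have : Subsingleton (Fin (0 + 1)) := inferInstanceAs (Subsingleton (Fin 1))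
    exact LinearIndependent.of_subsingleton 0 (h3 hs)
  | succ t ih =>
    intro V _ _ _ f h
    classical
    have hq : 1 < Fintype.card F := Fintype.one_lt_card
    have hs := h.hs
    obtain ⟨L, hL, hk⟩ := IsMinWt.exists_hyperplane _ V rfl (t + 1) s f (by omega) h
    have : Finite V := Module.finite_of_finite F
    have hker := finrank_ker_add_one hL
    obtain ⟨v, hv⟩ := exists_dual_eq_one hL
    have h1 := card_nonempty_slices L f
    rw [hk, show Fintype.card F - (Fintype.card F - 1) = 1 by omega] at h1
    obtain ⟨a, ha⟩ := Finset.card_eq_one.1 h1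
    have haL : a ∉ emptySlices L f := by
      have : a ∈ univ \ emptySlices L f := by rw [ha]; simp
      simpa using this
    have hsupp : ∀ x, L x ≠ a → f x = 0 := by
      intro x hx
      by_contra hfx
      apply hx
      rw [← Finset.mem_singleton, ← ha]
      simp only [Finset.mem_sdiff, Finset.mem_univ, true_and]
      exact fun hmem => hfx (mem_emptySlices.1 hmem x rfl)
    have hmin : IsMinWt t s (fun x : LinearMap.ker L => f (x + a • v)) := by
      obtain ⟨-, h2, h3⟩ := slice_mem hv h.mem haL
      refine ⟨hs, ?_, h3, ?_⟩
      · convert h2 using 2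
        rw [hk, Nat.succ_mul]
        omega
      · have hwt : wt f = sliceWt L f a := by rw [sum_sliceWt L f, ha, Finset.sum_singleton]
        rw [wt_slice L hv, ← hwt]
        have hq0 : 0 < Fintype.card F := by omega
        apply Nat.eq_of_mul_eq_mul_right hq0
        rw [mul_assoc, ← pow_succ, hker, h.wt_eq, pow_succ _ (t + 1)]
        ring
    obtain ⟨L', ω₀, ω, ω', hω₀, hω', hli, hli', hform⟩ := ih _ _ hmin
    obtain ⟨π, hπ, hπk⟩ := exists_ker_proj hv
    have hπv : π v = 0 := Subtype.ext (by rw [hπ, hv]; simp)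
    have hinj : LinearMap.ker π.dualMap = ⊥ :=
      LinearMap.ker_eq_bot.2 (LinearMap.dualMap_injective_of_surjective fun x => ⟨x, hπk x⟩)
    -- Every form pulled back along `π` kills `v`, whereas `L v = 1`.
    have hind : ∀ {k : ℕ} (N : Fin k → Module.Dual F (LinearMap.ker L)), LinearIndependent F N →
        LinearIndependent F (Fin.cons L (fun i => π.dualMap (N i)) :
          Fin (k + 1) → Module.Dual F V) := by
      intro k N hN
      rw [linearIndependent_finCons]
      refine ⟨hN.map' _ hinj, fun hmem => ?_⟩
      have hle : Submodule.span F (Set.range fun i => π.dualMap (N i)) ≤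
          LinearMap.ker (Module.Dual.eval F V v) := by
        rw [Submodule.span_le]
        rintro _ ⟨i, rfl⟩
        simp [hπv]
      have := hle hmem
      simp [hv] at this
    refine ⟨Fin.cons L (fun i => π.dualMap (L' i)), ω₀, Fin.cons a ω, ω', hω₀, hω', ?_,
      fun hs1 => hind L' (hli' hs1), fun x => ?_⟩
    · convert hind _ hli using 1
      funext i
      refine Fin.cases ?_ (fun j => ?_) i
      · rfl
      · rw [← Fin.succ_castSucc, Fin.cons_succ, Fin.cons_succ]
    · rw [Fin.prod_univ_succ, ← Fin.succ_last]
      simp only [← Fin.succ_castSucc, Fin.cons_succ, Fin.castSucc_zero, Fin.cons_zero]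
      by_cases hx : L x = a
      · have := hform (π x)
        rw [hπ, hx, sub_add_cancel] at this
        rw [this, hx, sub_self, zero_pow (by omega), sub_zero, one_mul]
        rfl
      · rw [hsupp x hx, FiniteField.pow_card_sub_one_eq_one _ (sub_ne_zero.2 hx)]
        simp

/-! ### Reed–Muller codes -/

lemma RM_le_affFun_pow [Fintype F] (r m : ℕ) : RM F r m ≤ affFun F (Fin m → F) ^ r := by
  rintro _ ⟨p, hp, rfl⟩
  have hdeg : p.totalDegree ≤ r := (MvPolynomial.mem_restrictTotalDegree _ _ _).1 hp.1
  rw [p.as_sum, map_sum]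
  refine Submodule.sum_mem _ fun d hd => ?_
  have hd' : ∑ i, d i ≤ r := by
    refine le_trans ?_ hdeg
    rw [← Finsupp.sum_fintype d (fun _ e => e) (by simp)]
    exact MvPolynomial.le_totalDegree hd
  refine affFun_pow_mono hd' ?_
  have hX : ∀ i : Fin m, (fun x : Fin m → F => x i) ∈ affFun F (Fin m → F) :=
    fun i => ⟨LinearMap.proj i, 0, fun x => by simp⟩
  have hprod : ∀ T : Finset (Fin m), (fun x : Fin m → F => ∏ i ∈ T, x i ^ d i) ∈
      affFun F (Fin m → F) ^ (∑ i ∈ T, d i) := by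
    classical
    intro T
    induction T using Finset.induction_on with
    | empty =>
      rw [Finset.sum_empty, pow_zero, Submodule.mem_one]
      exact ⟨1, by funext x; simp⟩
    | insert a T ha ih =>
      rw [Finset.sum_insert ha, pow_add]
      have := Submodule.mul_mem_mul (Submodule.pow_mem_pow _ (hX a) (d a)) ih
      convert this using 1
      funext x
      simp [Finset.prod_insert ha]
  convert Submodule.smul_mem _ (p.coeff d) (hprod Finset.univ) using 1
  funext x
  simp [Ev, MvPolynomial.eval_monomial, Finsupp.prod_fintype]

/-- The word of a product of linear factors `X i - a`, `a ∈ T i`, in separated variables. -/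
lemma exists_word [Fintype F] {m r : ℕ} (T : Fin m → Finset F)
    (hT : ∀ i, (T i).card ≤ Fintype.card F - 1) (hr : ∑ i, (T i).card ≤ r) :
    ∃ c ∈ RM F r m, c ≠ 0 ∧ wt c = ∏ i, (Fintype.card F - (T i).card) := by
  classical
  let p : MvPolynomial (Fin m) F := ∏ i, ∏ a ∈ T i, (X i - C a)
  have hq : 0 < Fintype.card F := Fintype.card_pos
  have hev : ∀ x, Ev F m p x = ∏ i, ∏ a ∈ T i, (x i - a) := fun x => by simp [Ev, p]
  have hwt : wt (Ev F m p) = ∏ i, (Fintype.card F - (T i).card) := by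
    have : Function.support (Ev F m p) = (Fintype.piFinset fun i => (T i)ᶜ : Finset _) := by
      ext x
      simp only [Function.mem_support, hev, Finset.prod_ne_zero_iff, Finset.mem_coe,
        Fintype.mem_piFinset, Finset.mem_compl, sub_ne_zero]
      constructor
      · intro h i hi
        exact h i (Finset.mem_univ _) _ hi rfl
      · intro h i _ a ha he
        exact h i (he ▸ ha)
    unfold wt
    rw [this, Set.ncard_coe_finset, Fintype.card_piFinset]
    simp [Finset.card_compl]
  refine ⟨Ev F m p, ⟨p, ⟨?_, ?_⟩, rfl⟩, ?_, hwt⟩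
  · refine (MvPolynomial.mem_restrictTotalDegree _ _ _).2 ?_
    refine le_trans (MvPolynomial.totalDegree_finsetProd _ _) (le_trans ?_ hr)
    refine Finset.sum_le_sum fun i _ => ?_
    refine le_trans (MvPolynomial.totalDegree_finsetProd _ _) ?_
    refine le_trans (Finset.sum_le_card_nsmul _ _ 1 fun a _ => ?_) (by simp)
    refine le_trans (MvPolynomial.totalDegree_sub_C_le _ _) (by simp)
  · refine (MvPolynomial.mem_restrictDegree_iff_sup _ _ _).2 fun j => ?_
    rw [← MvPolynomial.degreeOf_def]
    refine le_trans (MvPolynomial.degreeOf_prod_le j _ _) ?_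
    rw [Finset.sum_eq_single j]
    · refine le_trans (MvPolynomial.degreeOf_prod_le j _ _) (le_trans ?_ (hT j))
      refine le_trans (Finset.sum_le_card_nsmul _ _ 1 fun a _ => ?_) (by simp)
      exact le_trans (MvPolynomial.degreeOf_sub_le _ _ _) (by simp [MvPolynomial.degreeOf_C])
    · intro i _ hij
      refine Nat.le_zero.1 (le_trans (MvPolynomial.degreeOf_prod_le j _ _) ?_)
      rw [Finset.sum_eq_zero]
      intro a _
      refine Nat.le_zero.1 (le_trans (MvPolynomial.degreeOf_sub_le _ _ _) ?_)
      simp [MvPolynomial.degreeOf_C, MvPolynomial.degreeOf_X, hij.symm]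
    · simp
  · intro h0
    rw [h0] at hwt
    have : 0 < ∏ i, (Fintype.card F - (T i).card) :=
      Finset.prod_pos fun i _ => by have := hT i; omega
    rw [← hwt] at this
    simp [wt] at this

/-- Some nonzero word attains the lower bound for the weight. -/
lemma exists_min_word [Fintype F] {m t s : ℕ} (hs : s ≤ Fintype.card F - 2)
    (hr : t * (Fintype.card F - 1) + s ≤ m * (Fintype.card F - 1)) :
    ∃ c ∈ RM F (t * (Fintype.card F - 1) + s) m, c ≠ 0 ∧
      Fintype.card F ^ (t + 1) * wt c = (Fintype.card F - s) * Fintype.card F ^ m := by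
  classical
  have hq : 1 < Fintype.card F := Fintype.one_lt_card
  let τ : ℕ → ℕ := fun i => if i < t then Fintype.card F - 1 else if i = t then s else 0
  have hτ : ∀ i, τ i ≤ Fintype.card F - 1 := fun i => by
    simp only [τ]; split_ifs <;> omega
  have hex : ∀ i : Fin m, ∃ T : Finset F, T.card = τ i := fun i => by
    obtain ⟨T, -, hT⟩ := Finset.exists_subset_card_eq (s := (Finset.univ : Finset F))
      (n := τ i) (le_trans (hτ i) (by rw [Finset.card_univ]; omega))
    exact ⟨T, hT⟩
  choose T hT using hex
  have htm : t ≤ m := by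
    by_contra hlt
    have := Nat.mul_le_mul_right (Fintype.card F - 1) (show m + 1 ≤ t by omega)
    rw [Nat.succ_mul] at this
    omega
  have hlow : ∀ i ∈ Finset.range t, τ i = Fintype.card F - 1 := fun i hi => by
    simp only [τ]; rw [if_pos (Finset.mem_range.1 hi)]
  have hsumt : ∑ i ∈ Finset.range t, τ i = t * (Fintype.card F - 1) := by
    rw [Finset.sum_congr rfl hlow]; simp
  have hprodt : ∏ i ∈ Finset.range t, (Fintype.card F - τ i) = 1 := by
    refine Finset.prod_eq_one fun i hi => ?_
    rw [hlow i hi]; omega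
  have ht : τ t = s := by simp [τ]
  have hhigh : ∀ i, τ (t + 1 + i) = 0 := fun i => by
    simp only [τ]; rw [if_neg (by omega), if_neg (by omega)]
  have key : ∑ i : Fin m, τ i ≤ t * (Fintype.card F - 1) + s ∧
      Fintype.card F ^ (t + 1) * ∏ i : Fin m, (Fintype.card F - τ i) =
        (Fintype.card F - s) * Fintype.card F ^ m := by
    rw [Fin.sum_univ_eq_sum_range τ, Fin.prod_univ_eq_prod_range (fun i => Fintype.card F - τ i)]
    obtain rfl | hlt := Nat.eq_or_lt_of_le htm
    · have : s = 0 := by omega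
      subst this
      rw [hsumt, hprodt]
      refine ⟨by omega, ?_⟩
      rw [Nat.sub_zero, mul_one, pow_succ']
    · obtain ⟨u, rfl⟩ := Nat.exists_eq_add_of_le (show t + 1 ≤ m from hlt)
      rw [Finset.sum_range_add, Finset.prod_range_add, Finset.sum_range_succ,
        Finset.prod_range_succ, hsumt, hprodt, ht]
      simp only [hhigh]
      refine ⟨by simp, ?_⟩
      simp only [Nat.sub_zero, Finset.prod_const, Finset.card_range]
      rw [pow_add _ (t + 1) u]
      ring
  obtain ⟨c, hc, hc0, hwt⟩ := exists_word T (fun i => by rw [hT]; exact hτ i)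
    (by simp only [hT]; exact key.1)
  refine ⟨c, hc, hc0, ?_⟩
  rw [hwt]
  simp only [hT]
  exact key.2

end Helpers

/-- every minimum weight codeword `c` of `RM_q(r,m)` arises from a
polynomial `g = ω₀ · Π_{i=1}^{t} (1 − (L_i − ω_i)^{q−1}) · Π_{j=1}^{s} (L_{t+1} − ω'_j)`,
where `L_1,…,L_t` (and additionally `L_{t+1}` when `s ≥ 1`) are linearly independent
homogeneous linear forms (given here by their coefficient vectors), `ω₀ ≠ 0`, and
`ω'_1,…,ω'_s` are distinct; i.e., `c a = g(a)` for every point `a ∈ F^m`. -/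
theorem stmt_8 (F : Type) [Field F] [Fintype F] (q : ℕ) (hq : q = Fintype.card F)
    (m r t s : ℕ) (hm : 1 ≤ m) (hr : r ≤ m * (q - 1))
    (hts : r = t * (q - 1) + s) (hs : s ≤ q - 2)
    (c : (Fin m → F) → F) (hc : c ∈ RM F r m) (hc0 : c ≠ 0)
    (hcmin : wt c = minDist (RM F r m)) :
    ∃ (L : Fin (t + 1) → (Fin m → F)) (ω₀ : F) (ω : Fin t → F) (ω' : Fin s → F),
      ω₀ ≠ 0 ∧ Function.Injective ω' ∧
      LinearIndependent F (fun i : Fin t => L i.castSucc) ∧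
      (1 ≤ s → LinearIndependent F L) ∧
      ∀ a : Fin m → F,
        c a = ω₀ *
          (∏ i : Fin t, (1 - ((∑ j, L i.castSucc j * a j) - ω i) ^ (q - 1))) *
          (∏ k : Fin s, ((∑ j, L (Fin.last t) j * a j) - ω' k)) := by
  subst hq hts
  have hcA := RM_le_affFun_pow _ _ hc
  have hmin : IsMinWt t s c := by
    refine ⟨hs, hcA, hc0, le_antisymm (wtBound _ _ rfl t s c hs hcA hc0) ?_⟩
    obtain ⟨c', hc', hc0', hwt'⟩ := exists_min_word hs hr
    rw [Module.finrank_fin_fun, ← hwt', hcmin]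
    exact Nat.mul_le_mul_left _ (Nat.sInf_le ⟨c', hc', hc0', rfl⟩)
  obtain ⟨L, ω₀, ω, ω', h₀, h₁, h₂, h₃, h₄⟩ := IsMinWt.form s t _ c hmin
  let e := (dotProductEquiv F (Fin m)).symm
  have he : ∀ (l : Module.Dual F (Fin m → F)) a, ∑ j, e l j * a j = l a := fun l a =>
    LinearMap.congr_fun ((dotProductEquiv F (Fin m)).apply_symm_apply l) a
  refine ⟨fun i => e (L i), ω₀, ω, ω', h₀, h₁, h₂.map' e.toLinearMap e.ker,
    fun hs1 => (h₃ hs1).map' e.toLinearMap e.ker, fun a => ?_⟩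
  simp only [he]
  exact h₄ a

end
end

section
/- Let m, r be integers with m ≥ 1 and 0 ≤ r ≤ m(q−1). If m = 1, or r = 0, or r = m(q−1), or r = m(q−1) − 1, then the generalized Reed–Muller code RM_q(r,m) is an MDS code, i.e., its minimum distance equals q^m − dim RM_q(r,m) + 1. -/
/-!
For a nonzero code of length `N` and dimension `k`, the Singleton bound supplies a nonzero word of
weight at most `N - k + 1` (`minDist_eq_of_le`), so only the inequality `N + 1 ≤ wt c + k` for
nonzero codewords `c` has to be verified; this needs lower bounds on weight and dimension.

* `m = 1`: a nonzero polynomial of degree at most `r` has at most `r` roots, so `wt c ≥ q - r`; the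
  powers `1, X, …, X^r` stay independent as functions because `r < q`, so `k ≥ r + 1`.
* `r = 0`: nonzero codewords are nonzero constants, of weight `q^m`, and `k ≥ 1`.
* `r = m(q-1)`: every function is a reduced polynomial, so `k = q^m`, while `wt c ≥ 1`.
* `r = m(q-1) - 1`: a single reduced monomial is excluded, so `k ≥ q^m - 1`; the values of a
  polynomial of degree less than `m(q-1)` sum to zero over `F^m`, which rules out weight one.
-/

open MvPolynomial Finset

noncomputable section

/-- The Singleton bound together with its converse: if the code is nonzero and every nonzero word
has weight at least `N - k + 1`, then the minimum distance is exactly `N - k + 1`. A word of weight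
at most `N - k + 1` is found in the kernel of the projection onto some `k - 1` coordinates. -/
lemma minDist_eq_of_le {F : Type} [Field F] [Fintype F] {m : ℕ}
    (C : Submodule F ((Fin m → F) → F)) (hpos : 1 ≤ Module.finrank F C)
    (h : ∀ c ∈ C, c ≠ 0 → Fintype.card F ^ m + 1 ≤ wt c + Module.finrank F C) :
    minDist C = Fintype.card F ^ m - Module.finrank F C + 1 := by
  classical
  have hcard : Fintype.card (Fin m → F) = Fintype.card F ^ m := by simp
  have hk : Module.finrank F C ≤ Fintype.card F ^ m := by
    have := C.finrank_le
    rwa [Module.finrank_fintype_fun_eq_card, hcard] at this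
  obtain ⟨S, -, hS⟩ := Finset.exists_subset_card_eq
    (s := (Finset.univ : Finset (Fin m → F))) (n := Module.finrank F C - 1)
    (by rw [Finset.card_univ, hcard]; omega)
  let proj : C →ₗ[F] (S → F) := (LinearMap.funLeft F F (Subtype.val : S → _)).comp C.subtype
  have hker : LinearMap.ker proj ≠ ⊥ := LinearMap.ker_ne_bot_of_finrank_lt (by
    rw [Module.finrank_fintype_fun_eq_card, Fintype.card_coe, hS]; omega)
  obtain ⟨x, hx, hx0⟩ := Submodule.exists_mem_ne_zero_of_ne_bot hker
  have hx0' : (x : (Fin m → F) → F) ≠ 0 := fun e => hx0 (Subtype.ext e)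
  have hwt : wt (x : (Fin m → F) → F) ≤ Fintype.card F ^ m - Module.finrank F C + 1 := by
    have hsub : Function.support (x : (Fin m → F) → F) ⊆ ((Sᶜ : Finset _) : Set _) := by
      intro a ha
      simp only [Finset.coe_compl, Set.mem_compl_iff, Finset.mem_coe]
      exact fun haS => ha (congrFun (LinearMap.mem_ker.1 hx) ⟨a, haS⟩)
    have := Set.ncard_le_ncard hsub (Set.toFinite _)
    rw [Set.ncard_coe_finset, Finset.card_compl, hcard, hS] at this
    unfold wt
    omega
  have hge := h x x.2 hx0'
  apply le_antisymm
  · have hmem : wt (x : (Fin m → F) → F) ∈ {w | ∃ c ∈ C, c ≠ 0 ∧ wt c = w} :=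
      ⟨x, x.2, hx0', rfl⟩
    exact (Nat.sInf_le hmem).trans hwt
  · refine le_csInf ⟨_, x, x.2, hx0', rfl⟩ ?_
    rintro w ⟨c, hc, hc0, rfl⟩
    have := h c hc hc0
    omega

lemma one_le_wt {F : Type} [Field F] [Fintype F] {m : ℕ} {c : (Fin m → F) → F} (hc : c ≠ 0) :
    1 ≤ wt c := by
  unfold wt
  rw [Nat.one_le_iff_ne_zero, Ne, Set.ncard_eq_zero (Set.toFinite _)]
  simpa using hc

lemma map_restrictDegree_eq_top (F : Type) [Field F] [Fintype F] (m : ℕ) :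
    (restrictDegree (Fin m) F (Fintype.card F - 1)).map (Ev F m) = ⊤ :=
  map_restrict_dom_evalₗ F (Fin m)

lemma RM_top (F : Type) [Field F] [Fintype F] (m : ℕ) :
    RM F (m * (Fintype.card F - 1)) m = ⊤ := by
  rw [← map_restrictDegree_eq_top, RM, Vq, inf_eq_right.2]
  intro f hf
  rw [mem_restrictDegree] at hf
  rw [mem_restrictTotalDegree]
  refine Finset.sup_le fun s hs => ?_
  rw [Finsupp.sum_fintype _ _ (by simp)]
  refine (Finset.sum_le_sum fun i _ => hf s hs i).trans ?_
  simp

/-- Codewords of degree less than `m(q-1)` sum to zero, so a nonzero one cannot have weight one. -/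
lemma two_le_wt {F : Type} [Field F] [Fintype F] {m r : ℕ}
    (hr : r < m * (Fintype.card F - 1)) {c : (Fin m → F) → F} (hc : c ∈ RM F r m) (hc0 : c ≠ 0) :
    2 ≤ wt c := by
  classical
  obtain ⟨f, hf, rfl⟩ := hc
  have hdeg : f.totalDegree ≤ r := (mem_restrictTotalDegree _ _ _).1 hf.1
  have hsum : ∑ a, Ev F m f a = 0 :=
    sum_eval_eq_zero f (by rw [Fintype.card_fin, mul_comm]; omega)
  have h1 := one_le_wt hc0
  by_contra hlt
  have hone : wt (Ev F m f) = 1 := by omega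
  obtain ⟨a, ha⟩ := Set.ncard_eq_one.1 hone
  have hz : ∀ b, b ≠ a → Ev F m f b = 0 := by
    intro b hb
    by_contra hne
    have : b ∈ Function.support (Ev F m f) := hne
    rw [ha] at this
    exact hb this
  rw [Finset.sum_eq_single a (fun b _ hb => hz b hb) (by simp)] at hsum
  have : a ∈ Function.support (Ev F m f) := by rw [ha]; rfl
  exact this hsum

/-- Dropping the top degree costs at most one dimension, since `X₁^(q-1) ⋯ Xₘ^(q-1)` is the only
reduced monomial of degree `m(q-1)`. -/
lemma finrank_RM_top_sub_one (F : Type) [Field F] [Fintype F] (m : ℕ) :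
    Fintype.card F ^ m ≤ Module.finrank F (RM F (m * (Fintype.card F - 1) - 1) m) + 1 := by
  classical
  set n := Fintype.card F - 1 with hn
  let t : Fin m →₀ ℕ := Finsupp.equivFunOnFinite.symm fun _ => n
  let v := Ev F m (monomial t 1)
  have htop : RM F (m * n - 1) m ⊔ Submodule.span F {v} = ⊤ := by
    rw [← top_le_iff, ← map_restrictDegree_eq_top, Submodule.map_le_iff_le_comap]
    intro f hf
    rw [mem_restrictDegree] at hf
    have hmem : f - monomial t (coeff t f) ∈ Vq F (m * n - 1) m := by
      have hs : ∀ s ∈ (f - monomial t (coeff t f)).support, s ≠ t ∧ s ∈ f.support := by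
        intro s hs
        rw [mem_support_iff, coeff_sub, coeff_monomial] at hs
        by_cases hst : t = s
        · subst hst; simp at hs
        · rw [if_neg hst, sub_zero] at hs
          exact ⟨Ne.symm hst, mem_support_iff.2 hs⟩
      refine ⟨(mem_restrictTotalDegree _ _ _).2 ?_, (mem_restrictDegree _ _ _).2 ?_⟩
      · refine Finset.sup_le fun s hs' => ?_
        obtain ⟨hne, hsf⟩ := hs s hs'
        rw [Finsupp.sum_fintype _ _ (by simp)]
        have hle : ∀ i ∈ Finset.univ, s i ≤ n := fun i _ => hf s hsf i
        have hlt : ∃ i ∈ Finset.univ, s i < n := by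
          by_contra! hcon
          exact hne (Finsupp.ext fun i => le_antisymm (hle i (mem_univ i)) (hcon i (mem_univ i)))
        have := Finset.sum_lt_sum hle hlt
        simp only [Finset.sum_const, Finset.card_univ, Fintype.card_fin, smul_eq_mul] at this
        omega
      · exact fun s hs' i => hf s (hs s hs').2 i
    have hdecomp : Ev F m f = Ev F m (f - monomial t (coeff t f)) + coeff t f • v := by
      rw [← map_smul, ← map_add, smul_monomial, smul_eq_mul, mul_one, sub_add_cancel]
    rw [Submodule.mem_comap, hdecomp]
    exact Submodule.add_mem_sup (Submodule.mem_map_of_mem hmem)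
      (Submodule.smul_mem _ _ (Submodule.mem_span_singleton_self v))
  have h1 := Submodule.finrank_add_le_finrank_add_finrank (RM F (m * n - 1) m)
    (Submodule.span F {v})
  rw [htop, finrank_top, Module.finrank_fintype_fun_eq_card, Fintype.card_fun,
    Fintype.card_fin] at h1
  have h2 : Module.finrank F (Submodule.span F {v}) ≤ 1 := by
    simpa using finrank_span_le_card (R := F) ({v} : Set ((Fin m → F) → F))
  omega

lemma card_le_wt_add {F : Type} [Field F] [Fintype F] {r : ℕ} {p : Polynomial F} (hp : p ≠ 0)
    (hdeg : p.natDegree ≤ r) :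
    Fintype.card F ≤ wt (fun a : Fin 1 → F => p.eval (a 0)) + r := by
  classical
  set c : (Fin 1 → F) → F := fun a => p.eval (a 0) with hc
  have hsplit := Set.ncard_add_ncard_compl (Function.support c)
  have hzero : (Function.support c)ᶜ.ncard ≤ r := by
    refine le_trans ?_ ((Multiset.toFinset_card_le p.roots).trans ((p.card_roots').trans hdeg))
    rw [← Set.ncard_coe_finset]
    refine Set.ncard_le_ncard_of_injOn (fun a => a 0) ?_ ?_ (Set.toFinite _)
    · intro a ha
      simpa [hp, hc] using ha
    · intro a _ b _ hab
      funext i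
      rw [Subsingleton.elim i 0]
      exact hab
  rw [Nat.card_eq_fintype_card, Fintype.card_fun, Fintype.card_fin, pow_one] at hsplit
  unfold wt
  omega

/-- In one variable the code is a Reed–Solomon code; evaluation is injective in degree at most `r < q`, since a
nonzero polynomial of that degree has fewer than `q` roots. -/
lemma finrank_RM_one (F : Type) [Field F] [Fintype F] (r : ℕ) (hr : r ≤ Fintype.card F - 1) :
    r + 1 ≤ Module.finrank F (RM F r 1) := by
  classical
  have hq : 1 < Fintype.card F := Fintype.one_lt_card
  let E : Polynomial F →ₗ[F] MvPolynomial (Fin 1) F :=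
    (Polynomial.aeval (X 0 : MvPolynomial (Fin 1) F)).toLinearMap
  have hev : ∀ p, Ev F 1 (E p) = fun a => p.eval (a 0) := by
    intro p
    funext a
    change eval a (Polynomial.aeval (X 0) p) = _
    rw [Polynomial.aeval_def, Polynomial.hom_eval₂, eval_X,
      show (eval a).comp (algebraMap F (MvPolynomial (Fin 1) F)) = RingHom.id F by
        ext x; simp [algebraMap_eq]]
    rfl
  have hE : ∀ p ∈ Polynomial.degreeLT F (r + 1), E p ∈ Vq F r 1 := by
    intro p hp
    rw [Polynomial.degreeLT_eq_span_X_pow] at hp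
    refine (Submodule.span_le (p := (Vq F r 1).comap E)).2 ?_ hp
    intro x hx
    simp only [Finset.coe_image, Finset.coe_range, Set.mem_image, Set.mem_Iio] at hx
    obtain ⟨i, hi, rfl⟩ := hx
    change (Polynomial.aeval (X 0 : MvPolynomial (Fin 1) F)) (Polynomial.X ^ i) ∈ Vq F r 1
    rw [map_pow, Polynomial.aeval_X]
    refine ⟨(mem_restrictTotalDegree _ _ _).2 ?_, (mem_restrictDegree _ _ _).2 ?_⟩
    · rw [totalDegree_X_pow]; omega
    · intro s hs j
      rw [support_X_pow, Finset.mem_singleton] at hs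
      rw [hs, Subsingleton.elim j 0, Finsupp.single_eq_same]
      omega
  let L : Polynomial.degreeLT F (r + 1) →ₗ[F] ((Fin 1 → F) → F) :=
    (Ev F 1).comp (E.comp (Polynomial.degreeLT F (r + 1)).subtype)
  have hL : ∀ p, L p = Ev F 1 (E (p : Polynomial F)) := fun _ => rfl
  have hrange : LinearMap.range L ≤ RM F r 1 := by
    rintro _ ⟨p, rfl⟩
    rw [hL]
    exact Submodule.mem_map_of_mem (hE _ p.2)
  have hinj : Function.Injective L := by
    rw [← LinearMap.ker_eq_bot, Submodule.eq_bot_iff]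
    intro p hp
    by_contra hne
    have hp0 : (p : Polynomial F) ≠ 0 := fun e => hne (Subtype.ext e)
    have hdeg : (p : Polynomial F).natDegree ≤ r :=
      Nat.lt_succ_iff.1 ((Polynomial.natDegree_lt_iff_degree_lt hp0).2
        (Polynomial.mem_degreeLT.1 p.2))
    have hw := card_le_wt_add hp0 hdeg
    have hz := LinearMap.mem_ker.1 hp
    rw [hL] at hz
    rw [← hev, hz] at hw
    simp [wt] at hw
    omega
  have := Submodule.finrank_mono hrange
  rwa [LinearMap.finrank_range_of_inj hinj, (Polynomial.degreeLTEquiv F (r + 1)).finrank_eq, Module.finrank_fintype_fun_eq_card,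
    Fintype.card_fin] at this

lemma card_le_wt_add_of_mem_RM_one {F : Type} [Field F] [Fintype F] {r : ℕ}
    {c : (Fin 1 → F) → F} (hc : c ∈ RM F r 1) (hc0 : c ≠ 0) : Fintype.card F ≤ wt c + r := by
  obtain ⟨f, hf, rfl⟩ := hc
  have hdeg : f.totalDegree ≤ r := (mem_restrictTotalDegree _ _ _).1 hf.1
  let p : Polynomial F := aeval (fun _ => Polynomial.X) f
  have hp : Ev F 1 f = fun a => p.eval (a 0) := by
    funext a
    change eval a f = Polynomial.evalRingHom (a 0) (aeval (fun _ => Polynomial.X) f)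
    have ha : ∀ i, a i = a 0 := fun i => by rw [Subsingleton.elim i 0]
    clear hdeg hf hc0
    induction f using MvPolynomial.induction_on with
    | C x => simp
    | add f g hf hg => rw [map_add, map_add, map_add, hf, hg]
    | mul_X f i hf => rw [map_mul, map_mul, map_mul, hf, eval_X, aeval_X, ha i]; simp
  have hp0 : p ≠ 0 := by
    intro h0
    apply hc0
    rw [hp, h0]
    funext a
    simp
  have hpdeg : p.natDegree ≤ r := by
    simpa using aeval_natDegree_le f hdeg (fun _ => Polynomial.X)
      (fun _ => Polynomial.natDegree_X_le)
  rw [hp]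
  exact card_le_wt_add hp0 hpdeg

/-- Codewords of degree zero are constant functions, so the nonzero ones vanish nowhere. -/
lemma wt_of_mem_RM_zero {F : Type} [Field F] [Fintype F] {m : ℕ}
    {c : (Fin m → F) → F} (hc : c ∈ RM F 0 m) (hc0 : c ≠ 0) : wt c = Fintype.card F ^ m := by
  obtain ⟨f, hf, rfl⟩ := hc
  have hdeg : f.totalDegree ≤ 0 := (mem_restrictTotalDegree _ _ _).1 hf.1
  have hC := totalDegree_eq_zero_iff_eq_C.1 (Nat.le_zero.1 hdeg)
  have hconst : ∀ a, Ev F m f a = coeff 0 f := by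
    intro a
    change eval a f = _
    conv_lhs => rw [hC]
    exact eval_C _
  have hne : coeff 0 f ≠ 0 := fun h => hc0 (funext fun a => by rw [hconst, h]; rfl)
  have hsupp : Function.support (Ev F m f) = Set.univ := by
    ext a
    simp [hconst, hne]
  rw [wt, hsupp, Set.ncard_univ, Nat.card_eq_fintype_card, Fintype.card_fun, Fintype.card_fin]

lemma one_le_finrank_RM (F : Type) [Field F] [Fintype F] (r m : ℕ) :
    1 ≤ Module.finrank F (RM F r m) := by
  rw [Submodule.one_le_finrank_iff, Submodule.ne_bot_iff]
  refine ⟨Ev F m 1, Submodule.mem_map_of_mem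
    ⟨(mem_restrictTotalDegree _ _ _).2 (by simp), (mem_restrictDegree _ _ _).2 ?_⟩, ?_⟩
  · intro s hs i
    rw [support_one, Finset.mem_singleton] at hs
    simp [hs]
  · intro h
    have := congrFun h 0
    simp [Ev] at this

/-- if `m = 1`, or `r = 0`, or `r = m(q−1)`, or `r = m(q−1) − 1`, then
`RM_q(r,m)` is an MDS code: its minimum distance equals `q^m − dim RM_q(r,m) + 1`. -/
theorem stmt_9 (F : Type) [Field F] [Fintype F] (q : ℕ) (hq : q = Fintype.card F)
    (m r : ℕ) (hm : 1 ≤ m) (hr : r ≤ m * (q - 1))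
    (hcase : m = 1 ∨ r = 0 ∨ r = m * (q - 1) ∨ r = m * (q - 1) - 1) :
    minDist (RM F r m) = q ^ m - Module.finrank F (RM F r m) + 1 := by
  subst hq
  have hq1 : 1 < Fintype.card F := Fintype.one_lt_card
  refine minDist_eq_of_le _ (one_le_finrank_RM F r m) fun c hc hc0 => ?_
  rcases hcase with rfl | rfl | rfl | rfl
  · have h1 := finrank_RM_one F r (by simpa using hr)
    have h2 := card_le_wt_add_of_mem_RM_one hc hc0
    rw [pow_one]
    omega
  · have h1 := one_le_finrank_RM F 0 m
    rw [wt_of_mem_RM_zero hc hc0]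
    omega
  · have h1 := one_le_wt hc0
    rw [RM_top, finrank_top, Module.finrank_fintype_fun_eq_card, Fintype.card_fun,
      Fintype.card_fin]
    omega
  · have hpos : 0 < m * (Fintype.card F - 1) := Nat.mul_pos hm (by omega)
    have h1 := finrank_RM_top_sub_one F m
    have h2 := two_le_wt (by omega) hc hc0
    omega

end
end

section
/- Let q be a prime power with q ≥ 4, let m ≥ 2 and 1 ≤ t ≤ m−1 be integers, and set r = t(q−1) + 1. Let ω_1, …, ω_q be an enumeration of the elements of F_q and let ω'_1, ω'_2 be two distinct elements of F_q. Define Q(X_1,…,X_m) = (Π_{i=1}^{t−1} (X_i^{q−1} − 1)) · (Π_{j=3}^{q} (X_t − ω_j)) · (Π_{k=1}^{2} (X_{t+1} − ω'_k)). Then Q ∈ V_q(r,m), the support of Ev(Q) corresponds to the set {a = (a_1,…,a_m) ∈ F_q^m : a_1 = ⋯ = a_{t−1} = 0, a_t ∈ {ω_1, ω_2}, and a_{t+1} ∉ {ω'_1, ω'_2}}, and wt(Ev(Q)) = 2(q−2)·q^{m−t−1}, which is strictly greater than the minimum distance (q−1)·q^{m−t−1} of RM_q(r,m). -/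
/-!
`Q` is a product `∏ i, g i (X i)` of univariate factors in distinct variables, so its total degree
is at most `∑ i, deg (g i)`, its degree in `X i` is at most `deg (g i)`, and the support of its
evaluation is the product of the sets of nonzeros of the `g i`. This gives its membership in
`V_q(r,m)`, its support and its weight; the same reasoning applied to
`∏_{i ≤ t} (X_i ^ (q - 1) - 1) * (X_{t+1} - w1)` gives a codeword of weight `(q - 1) q ^ (m - t - 1)`.

That no nonzero codeword is lighter is the case `b = 1` of the classical bound
`(q - b) q ^ (m - a - 1)` for degree at most `a (q - 1) + b` (`card_nonzero_lower`), proved by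
induction on `m`. View `f` as a polynomial in `X 0` with leading coefficient `g` and degree `d`.
Above each point where `g` does not vanish, `f` has at least `q - d` nonzeros
(`card_nonzero_step`), and `g` is a reduced polynomial of total degree at most `deg f - d` in one
variable fewer. The bounds then follow from `(q - d) (q - b + d) ≥ q (q - b)` when `d ≤ b`, and
from `(q - d) (d - b + 1) ≥ q - b` when `d > b`.
-/

open MvPolynomial Finset

noncomputable section

section ReedMuller

/-! ### Products of univariate polynomials in distinct variables -/

variable {F : Type} [Field F] {m : ℕ}

lemma totalDegree_aeval_X_le (p : Polynomial F) (i : Fin m) :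
    (Polynomial.aeval (X i : MvPolynomial (Fin m) F) p).totalDegree ≤ p.natDegree := by
  rw [Polynomial.aeval_eq_sum_range]
  refine totalDegree_finsetSum_le fun k hk => (totalDegree_smul_le _ _).trans ?_
  rw [totalDegree_X_pow]
  exact Nat.lt_succ_iff.mp (Finset.mem_range.mp hk)

lemma degreeOf_aeval_X_of_ne (p : Polynomial F) {i j : Fin m} (h : j ≠ i) :
    degreeOf j (Polynomial.aeval (X i : MvPolynomial (Fin m) F) p) = 0 := by
  rw [Polynomial.aeval_eq_sum_range, ← Nat.le_zero]
  refine (degreeOf_sum_le _ _ _).trans (Finset.sup_le fun k _ => ?_)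
  rw [smul_eq_C_mul]
  exact (degreeOf_C_mul_le _ _ _).trans (degreeOf_X_pow_of_ne k h).le

variable [Fintype F]

/-- The separated polynomial `∏ i, g i (X i)`. -/
def sepPoly (g : Fin m → Polynomial F) : MvPolynomial (Fin m) F :=
  ∏ i, Polynomial.aeval (X i) (g i)

lemma mem_Vq_iff {r : ℕ} (f : MvPolynomial (Fin m) F) :
    f ∈ Vq F r m ↔ f.totalDegree ≤ r ∧ ∀ i, degreeOf i f ≤ Fintype.card F - 1 := by
  classical
  simp only [Vq, Submodule.mem_inf, mem_restrictTotalDegree, mem_restrictDegree_iff_sup,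
    degreeOf_def]

lemma sepPoly_mem_Vq {r : ℕ} (g : Fin m → Polynomial F)
    (hdeg : ∀ i, (g i).natDegree ≤ Fintype.card F - 1) (hsum : ∑ i, (g i).natDegree ≤ r) :
    sepPoly g ∈ Vq F r m := by
  rw [mem_Vq_iff]
  refine ⟨(totalDegree_finsetProd _ _).trans
    ((Finset.sum_le_sum fun i _ => totalDegree_aeval_X_le (g i) i).trans hsum), fun j => ?_⟩
  refine (degreeOf_prod_le _ _ _).trans ?_
  rw [Finset.sum_eq_single j (fun i _ h => degreeOf_aeval_X_of_ne _ h.symm) (by simp)]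
  exact (degreeOf_le_totalDegree _ _).trans ((totalDegree_aeval_X_le _ _).trans (hdeg j))

lemma Ev_sepPoly (g : Fin m → Polynomial F) (a : Fin m → F) :
    Ev F m (sepPoly g) a = ∏ i, (g i).eval (a i) := by
  simp only [Ev, sepPoly, LinearMap.coe_mk, AddHom.coe_mk, map_prod]
  refine Finset.prod_congr rfl fun i _ => ?_
  have h := Polynomial.aeval_algHom_apply (MvPolynomial.aeval (R := F) a) (X i) (g i)
  rw [aeval_X] at h
  simpa [MvPolynomial.aeval_eq_eval, Polynomial.coe_aeval_eq_eval] using h.symm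

lemma wt_Ev_sepPoly (g : Fin m → Polynomial F) :
    wt (Ev F m (sepPoly g)) = ∏ i, Set.ncard {x : F | (g i).eval x ≠ 0} := by
  classical
  have h : Function.support (Ev F m (sepPoly g)) =
      ↑(Fintype.piFinset fun i => Finset.univ.filter fun x : F => (g i).eval x ≠ 0) := by
    ext a
    simp [Ev_sepPoly, Finset.prod_eq_zero_iff]
  rw [wt, h, Set.ncard_coe_finset, Fintype.card_piFinset]
  refine Finset.prod_congr rfl fun i _ => ?_
  rw [← Set.ncard_coe_finset]
  simp

/-- Product over `Fin m` with `m = s + 2 + k`, with the factors at `s` and `s + 1` isolated. -/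
@[to_additive]
lemma prod_fin_split {M : Type*} [CommMonoid M] {s k : ℕ} (hm : m = s + 1 + 1 + k)
    (f : Fin m → M) :
    ∏ i, f i = (∏ i : Fin s, f (Fin.castLE (by omega) i)) * f ⟨s, by omega⟩ *
      f ⟨s + 1, by omega⟩ * ∏ j : Fin k, f ⟨s + 1 + 1 + j, by omega⟩ := by
  subst hm
  rw [Fin.prod_univ_add, Fin.prod_univ_castSucc, Fin.prod_univ_castSucc]
  rfl

/-- The family indexed by `Fin m` equal to `x` before position `s`, to `y` at `s`, to `z` at
`s + 1`, and to `w` afterwards. -/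
def block {α : Type*} (m s : ℕ) (x y z w : α) (i : Fin m) : α :=
  if (i : ℕ) < s then x else if (i : ℕ) = s then y else if (i : ℕ) = s + 1 then z else w

lemma block_forall {α : Type*} {P : α → Prop} {s : ℕ} {x y z w : α} (hx : P x) (hy : P y)
    (hz : P z) (hw : P w) (i : Fin m) : P (block m s x y z w i) := by
  unfold block
  split_ifs <;> assumption

@[to_additive]
lemma prod_block {M α : Type*} [CommMonoid M] {s k : ℕ} (hm : m = s + 1 + 1 + k)
    (x y z w : α) (f : α → M) :
    ∏ i, f (block m s x y z w i) = f x ^ s * f y * f z * f w ^ k := by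
  rw [prod_fin_split hm]
  have h1 : ∀ j, ¬ s + 1 + 1 + j < s := by omega
  have h2 : ∀ j, ¬ s + 1 + 1 + j = s := by omega
  have h3 : ∀ j, ¬ s + 1 + 1 + j = s + 1 := by omega
  simp [block, h1, h2, h3]

/-! ### Lower bound for the number of nonzeros -/

lemma card_nonzero_ge [DecidableEq F] (p : Polynomial F) (hp : p ≠ 0) :
    Fintype.card F - p.natDegree ≤ #{x : F | p.eval x ≠ 0} := by
  have h1 : #{x : F | p.eval x = 0} ≤ p.natDegree := by
    refine le_trans (Finset.card_le_card (t := p.roots.toFinset) fun x hx => ?_)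
      ((Multiset.toFinset_card_le _).trans p.card_roots')
    simpa [hp] using hx
  have h2 := Finset.card_filter_add_card_filter_not (s := (Finset.univ : Finset F))
    (fun x => p.eval x = 0)
  rw [Finset.card_univ] at h2
  simp only [ne_eq]
  omega

/-- Peeling off the first variable: above each nonzero of the leading coefficient `g` of `f` with
respect to `X 0`, the polynomial `f` restricts to a univariate polynomial whose degree is exactly
`degreeOf 0 f`. -/
lemma card_nonzero_step [DecidableEq F] (f : MvPolynomial (Fin (m + 1)) F) :
    (Fintype.card F - degreeOf 0 f) *
        #{s : Fin m → F | eval s (finSuccEquiv F m f).leadingCoeff ≠ 0} ≤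
      #{a : Fin (m + 1) → F | eval a f ≠ 0} := by
  set p := finSuccEquiv F m f with hp
  have key : ∀ s : Fin m → F, eval s p.leadingCoeff ≠ 0 →
      Fintype.card F - degreeOf 0 f ≤ #{y : F | eval (Fin.cons y s : Fin (m + 1) → F) f ≠ 0} := by
    intro s hs
    have hd : (p.map (eval s)).natDegree = degreeOf 0 f := by
      rw [Polynomial.natDegree_map_of_leadingCoeff_ne_zero _ hs, hp, natDegree_finSuccEquiv]
    have h0 : p.map (eval s) ≠ 0 := fun h => hs (by
      have := congrArg (fun u => Polynomial.coeff u p.natDegree) h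
      simpa [Polynomial.coeff_map] using this)
    have := card_nonzero_ge _ h0
    rw [hd] at this
    simpa only [eval_eq_eval_mv_eval'] using this
  have hsig := Finset.card_le_card_of_injOn
    (s := ({s : Fin m → F | eval s p.leadingCoeff ≠ 0} : Finset _).sigma
      fun s => ({y : F | eval (Fin.cons y s : Fin (m + 1) → F) f ≠ 0} : Finset F))
    (t := ({a : Fin (m + 1) → F | eval a f ≠ 0} : Finset _))
    (fun u => (Fin.cons u.2 u.1 : Fin (m + 1) → F))
    (by
      intro u hu
      simp only [Finset.coe_sigma, Set.mem_sigma_iff, Finset.mem_coe, Finset.mem_filter,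
        Finset.mem_univ, true_and] at hu ⊢
      exact hu.2)
    (by
      rintro ⟨s, y⟩ _ ⟨s₂, y₂⟩ _ h
      obtain ⟨h1, h2⟩ := Fin.cons_inj.mp h
      subst h1 h2
      rfl)
  refine le_trans ?_ hsig
  rw [Finset.card_sigma, mul_comm, ← smul_eq_mul]
  exact Finset.card_nsmul_le_sum _ _ _ fun s hs => key s (by simpa using hs)

/-- A nonzero reduced polynomial does not vanish identically on `F ^ m`. -/
lemma exists_eval_ne_zero (f : MvPolynomial (Fin m) F) (hf : f ≠ 0)
    (hdeg : ∀ i, degreeOf i f ≤ Fintype.card F - 1) : ∃ a, eval a f ≠ 0 := by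
  by_contra! h
  classical
  refine hf (eq_zero_of_eval_eq_zero _ _ f h ?_)
  rw [mem_restrictDegree_iff_sup]
  simpa only [degreeOf_def] using hdeg

/-- The minimum distance bound for generalized Reed–Muller codes: a nonzero reduced polynomial of
total degree at most `a (q - 1) + b` has at least `(q - b) q ^ (m - a - 1)` nonzeros. The remainder
`b = q - 1` is allowed, so that the degree left after peeling off a variable need not be
normalized. -/
lemma card_nonzero_lower [DecidableEq F] (m : ℕ) : ∀ (a b : ℕ), a < m → b < Fintype.card F →
    ∀ f : MvPolynomial (Fin m) F, f ≠ 0 →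
    f.totalDegree ≤ a * (Fintype.card F - 1) + b →
    (∀ i, degreeOf i f ≤ Fintype.card F - 1) →
    (Fintype.card F - b) * Fintype.card F ^ (m - a - 1) ≤ #{x : Fin m → F | eval x f ≠ 0} := by
  induction m with
  | zero => intro a b ha; omega
  | succ m ih =>
    intro a b ha hb f hf htot hdeg
    have hstep := card_nonzero_step f
    set g := (finSuccEquiv F m f).leadingCoeff with hg
    set q := Fintype.card F with hq
    set d := degreeOf 0 f with hd
    have hd1 : d ≤ q - 1 := hdeg 0
    have hg0 : g ≠ 0 := by
      rw [hg, Polynomial.leadingCoeff_ne_zero]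
      simpa using hf
    have hgdeg : ∀ i, degreeOf i g ≤ q - 1 := fun i =>
      (degreeOf_coeff_finSuccEquiv f i _).trans (hdeg i.succ)
    have hgtot : g.totalDegree + d ≤ a * (q - 1) + b := by
      have := totalDegree_coeff_finSuccEquiv_add_le f (finSuccEquiv F m f).natDegree
        hg0
      rw [hd, ← natDegree_finSuccEquiv]
      exact this.trans htot
    -- The leading coefficient `g` has degree at most `r - d`, where `r = a (q - 1) + b`. The
    -- quotient of `r - d` by `q - 1` can be taken as `a` if `d ≤ b`, and as `a - 1` otherwise.
    by_cases hdb : d ≤ b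
    · rcases Nat.lt_or_ge a m with ham | ham
      · have h1 := ih a (b - d) ham (by omega) g hg0 (by omega) hgdeg
        refine le_trans ?_ ((Nat.mul_le_mul_left (q - d) h1).trans hstep)
        have e1 : m + 1 - a - 1 = (m - a - 1) + 1 := by omega
        rw [e1, pow_succ, mul_comm (q ^ _) q, ← mul_assoc, ← mul_assoc]
        refine Nat.mul_le_mul_right _ ?_
        obtain ⟨c, rfl⟩ := Nat.exists_eq_add_of_le hdb
        obtain ⟨u, hu⟩ := Nat.exists_eq_add_of_le hb.le
        rw [hu]
        have e2 : d + c + u - (d + c) = u := by omega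
        have e3 : d + c + u - d = c + u := by omega
        have e4 : d + c + u - (d + c - d) = d + u := by omega
        rw [e2, e3, e4]
        nlinarith [Nat.zero_le (c * d)]
      · -- Here `a = m`, so the induction hypothesis does not apply; one nonzero of `g` suffices.
        obtain ⟨s, hs⟩ := exists_eval_ne_zero g hg0 hgdeg
        have h1 : 1 ≤ #{s : Fin m → F | eval s g ≠ 0} :=
          Finset.card_pos.mpr ⟨s, by simpa using hs⟩
        refine le_trans ?_ ((Nat.mul_le_mul_left (q - d) h1).trans hstep)
        have e1 : m + 1 - a - 1 = 0 := by omega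
        rw [e1, pow_zero]
        omega
    · obtain _ | a := a
      · omega
      have e0 : (a + 1) * (q - 1) = a * (q - 1) + (q - 1) := by ring
      have h1 := ih a (q - 1 + b - d) (by omega) (by omega) g hg0 (by omega) hgdeg
      refine le_trans ?_ ((Nat.mul_le_mul_left (q - d) h1).trans hstep)
      have e1 : m + 1 - (a + 1) - 1 = m - a - 1 := by omega
      rw [e1, ← mul_assoc]
      refine Nat.mul_le_mul_right _ ?_
      obtain ⟨c, hc⟩ := Nat.exists_eq_add_of_lt (not_le.mp hdb)
      obtain ⟨u, hu⟩ : ∃ u, q = d + 1 + u := ⟨q - (d + 1), by omega⟩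
      have e2 : q - b = c + u + 2 := by omega
      have e3 : q - d = u + 1 := by omega
      have e4 : q - (q - 1 + b - d) = c + 2 := by omega
      rw [e2, e3, e4]
      nlinarith [Nat.zero_le (c * u)]

lemma wt_eq_card [DecidableEq F] (f : MvPolynomial (Fin m) F) :
    wt (Ev F m f) = #{x : Fin m → F | eval x f ≠ 0} := by
  rw [wt, ← Set.ncard_coe_finset]
  congr 1
  ext a
  simp [Ev]

end ReedMuller

/-! ### The polynomial `Q` -/

/-- for `q ≥ 4`, `m ≥ 2`, `1 ≤ t ≤ m−1`, `r = t(q−1)+1`, an enumeration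
`ω_1,…,ω_q` of `F_q` (here `e 0, …, e (q-1)`) and distinct `ω'_1, ω'_2` (here `w1, w2`),
the polynomial `Q = Π_{i=1}^{t−1}(X_i^{q−1}−1) · Π_{j=3}^{q}(X_t−ω_j) · Π_{k=1}^{2}(X_{t+1}−ω'_k)`
lies in `V_q(r,m)`, its evaluation has support
`{a : a_1 = ⋯ = a_{t−1} = 0, a_t ∈ {ω_1, ω_2}, a_{t+1} ∉ {ω'_1, ω'_2}}` and weight
`2(q−2)q^{m−t−1}`, strictly greater than the minimum distance `(q−1)q^{m−t−1}` of
`RM_q(r,m)`. -/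
theorem stmt_12 (F : Type) [Field F] [Fintype F] (q : ℕ) (hq : q = Fintype.card F)
    (hq4 : 4 ≤ q) (m t r : ℕ) (hm : 2 ≤ m) (ht1 : 1 ≤ t) (ht2 : t ≤ m - 1)
    (hr : r = t * (q - 1) + 1)
    (e : Fin q → F) (he : Function.Bijective e)
    (w1 w2 : F) (hw : w1 ≠ w2)
    (Q : MvPolynomial (Fin m) F)
    (hQ : Q = (∏ i : Fin (t - 1),
        ((X (Fin.castLE (by omega) i) : MvPolynomial (Fin m) F) ^ (q - 1) - 1)) *
      (∏ j ∈ Finset.univ.filter (fun j : Fin q => 2 ≤ (j : ℕ)),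
        (X (⟨t - 1, by omega⟩ : Fin m) - C (e j))) *
      ((X (⟨t, by omega⟩ : Fin m) - C w1) * (X (⟨t, by omega⟩ : Fin m) - C w2))) :
    Q ∈ Vq F r m ∧
    Function.support (Ev F m Q) =
      {a : Fin m → F | (∀ i : Fin (t - 1), a (Fin.castLE (by omega) i) = 0) ∧
        (a ⟨t - 1, by omega⟩ = e ⟨0, by omega⟩ ∨ a ⟨t - 1, by omega⟩ = e ⟨1, by omega⟩) ∧
        a ⟨t, by omega⟩ ≠ w1 ∧ a ⟨t, by omega⟩ ≠ w2} ∧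
    wt (Ev F m Q) = 2 * (q - 2) * q ^ (m - t - 1) ∧
    minDist (RM F r m) = (q - 1) * q ^ (m - t - 1) ∧
    (q - 1) * q ^ (m - t - 1) < wt (Ev F m Q) := by
  classical
  obtain ⟨s, rfl⟩ : ∃ s, t = s + 1 := ⟨t - 1, by omega⟩
  obtain ⟨k, hk⟩ : ∃ k, m = s + 1 + 1 + k := ⟨m - (s + 1 + 1), by omega⟩
  have hexp : m - (s + 1) - 1 = k := by omega
  have hq0 : q ≠ 0 := by omega
  -- The univariate factors of `Q`.
  set A : Polynomial F := Polynomial.X ^ (q - 1) - 1 with hA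
  set B : Polynomial F := ∏ j ∈ Finset.univ.filter (fun j : Fin q => 2 ≤ (j : ℕ)),
    (Polynomial.X - Polynomial.C (e j)) with hB
  set D : Polynomial F := (Polynomial.X - Polynomial.C w1) * (Polynomial.X - Polynomial.C w2)
    with hD
  have hAdeg : A.natDegree = q - 1 := by
    rw [hA, ← Polynomial.C_1, Polynomial.natDegree_X_pow_sub_C]
  have hcard2 : #(Finset.univ.filter (fun j : Fin q => (2 : ℕ) ≤ (j : ℕ))) = q - 2 := by
    have h := Fin.card_filter_val_lt (n := q) (m := 2)
    have h2 := Finset.card_filter_add_card_filter_not (s := (Finset.univ : Finset (Fin q)))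
      (fun j => (j : ℕ) < 2)
    simp only [not_lt, Finset.card_univ, Fintype.card_fin] at h2
    omega
  have hBdeg : B.natDegree = q - 2 := by
    rw [hB, Polynomial.natDegree_finsetProd_X_sub_C_eq_card, hcard2]
  have hDdeg : D.natDegree = 2 := by
    rw [hD, Polynomial.natDegree_mul (Polynomial.X_sub_C_ne_zero _)
      (Polynomial.X_sub_C_ne_zero _), Polynomial.natDegree_X_sub_C, Polynomial.natDegree_X_sub_C]
  have hAev : ∀ x : F, A.eval x ≠ 0 ↔ x = 0 := by
    intro x
    by_cases hx : x = 0
    · have : q - 1 ≠ 0 := by omega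
      simp [hA, hx, this]
    · have := FiniteField.pow_card_sub_one_eq_one x hx
      rw [← hq] at this
      simp [hA, this, hx]
  have hBev : ∀ x : F, B.eval x ≠ 0 ↔ x = e ⟨0, by omega⟩ ∨ x = e ⟨1, by omega⟩ := by
    intro x
    obtain ⟨j, rfl⟩ := he.surjective x
    simp only [hB, Polynomial.eval_prod, Polynomial.eval_sub, Polynomial.eval_X,
      Polynomial.eval_C, Finset.prod_ne_zero_iff, Finset.mem_filter, Finset.mem_univ, true_and,
      he.injective.eq_iff, sub_ne_zero, ne_eq, Fin.ext_iff]
    constructor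
    · intro h
      by_contra hc
      exact h j (by omega) rfl
    · intro h i hi
      omega
  have hDev : ∀ x : F, D.eval x ≠ 0 ↔ x ≠ w1 ∧ x ≠ w2 := by
    intro x
    simp [hD, sub_eq_zero]
  have hNA : Set.ncard {x : F | A.eval x ≠ 0} = 1 := by
    simp only [hAev]
    exact Set.ncard_singleton 0
  have hNB : Set.ncard {x : F | B.eval x ≠ 0} = 2 := by
    simp only [hBev]
    exact Set.ncard_pair (by simp [he.injective.eq_iff])
  have hcardF : Nat.card F = q := by rw [hq, Nat.card_eq_fintype_card]
  have hND : Set.ncard {x : F | D.eval x ≠ 0} = q - 2 := by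
    have h : {x : F | D.eval x ≠ 0} = ({w1, w2} : Set F)ᶜ := by
      ext x
      simp [hDev]
    rw [h, Set.ncard_compl, Set.ncard_pair hw, hcardF]
  have hN1 : Set.ncard {x : F | (1 : Polynomial F).eval x ≠ 0} = q := by
    simp [Set.ncard_univ, hq]
  have hNL : Set.ncard {x : F | (Polynomial.X - Polynomial.C w1).eval x ≠ 0} = q - 1 := by
    have h : {x : F | (Polynomial.X - Polynomial.C w1).eval x ≠ 0} = ({w1} : Set F)ᶜ := by
      ext x
      simp [sub_eq_zero]
    rw [h, Set.ncard_compl, Set.ncard_singleton, hcardF]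
  have hQ' : Q = sepPoly (block m s A B D 1) := by
    rw [hQ, sepPoly, prod_fin_split hk]
    have h1 : ∀ j, ¬ s + 1 + 1 + j < s := by omega
    have h2 : ∀ j, ¬ s + 1 + 1 + j = s := by omega
    have h3 : ∀ j, ¬ s + 1 + 1 + j = s + 1 := by omega
    simp [block, h1, h2, h3, hA, hB, hD, map_prod, algebraMap_eq]
  have hwt : wt (Ev F m Q) = 2 * (q - 2) * q ^ (m - (s + 1) - 1) := by
    rw [hQ', wt_Ev_sepPoly,
      prod_block hk A B D 1 (fun p : Polynomial F => Set.ncard {x : F | p.eval x ≠ 0}),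
      hNA, hNB, hND, hN1, hexp]
    ring
  refine ⟨?_, ?_, hwt, ?_, ?_⟩
  · rw [hQ']
    refine sepPoly_mem_Vq _ (fun i => ?_) ?_
    · refine block_forall (P := fun p : Polynomial F => p.natDegree ≤ Fintype.card F - 1)
        ?_ ?_ ?_ ?_ i
      · omega
      · omega
      · omega
      · simp
    · rw [sum_block hk A B D 1 Polynomial.natDegree, hAdeg, hBdeg, hDdeg, hr, add_mul]
      simp
      omega
  · ext a
    rw [Function.mem_support, hQ', Ev_sepPoly, prod_fin_split hk]
    have h1 : ∀ j, ¬ s + 1 + 1 + j < s := by omega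
    have h2 : ∀ j, ¬ s + 1 + 1 + j = s := by omega
    have h3 : ∀ j, ¬ s + 1 + 1 + j = s + 1 := by omega
    simp only [block, Fin.val_castLE, Fin.is_lt, if_true, lt_irrefl, if_false, h1, h2, h3,
      Polynomial.eval_one, Finset.prod_const_one, mul_one, mul_ne_zero_iff,
      Finset.prod_ne_zero_iff, Finset.mem_univ, true_implies, hAev, hBev, hDev,
      Set.mem_ofPred_eq, show ¬ s + 1 < s by omega, show ¬ s + 1 = s by omega, and_assoc]
    rfl
  · -- The minimum is attained by `∏_{i ≤ t} (X_i ^ (q - 1) - 1) * (X_{t+1} - w1)`.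
    have hw0 : wt (Ev F m (sepPoly (block m s A A (Polynomial.X - Polynomial.C w1) 1))) =
        (q - 1) * q ^ k := by
      rw [wt_Ev_sepPoly, prod_block hk A A (Polynomial.X - Polynomial.C w1) 1
        (fun p : Polynomial F => Set.ncard {x : F | p.eval x ≠ 0}), hNA, hNL, hN1]
      ring
    have hmem : sepPoly (block m s A A (Polynomial.X - Polynomial.C w1) 1) ∈ Vq F r m := by
      refine sepPoly_mem_Vq _ (fun i => ?_) ?_
      · refine block_forall (P := fun p : Polynomial F => p.natDegree ≤ Fintype.card F - 1)
          ?_ ?_ ?_ ?_ i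
        · omega
        · omega
        · rw [Polynomial.natDegree_X_sub_C]
          omega
        · simp
      · rw [sum_block hk A A _ 1 Polynomial.natDegree, hAdeg, Polynomial.natDegree_X_sub_C, hr,
          add_mul]
        simp
    have hne : Ev F m (sepPoly (block m s A A (Polynomial.X - Polynomial.C w1) 1)) ≠ 0 := by
      intro h0
      rw [h0] at hw0
      have hpos : 0 < (q - 1) * q ^ k := Nat.mul_pos (by omega) (Nat.pow_pos (by omega))
      simp only [wt, Function.support_zero, Set.ncard_empty] at hw0
      omega
    rw [hexp, minDist]
    refine le_antisymm (Nat.sInf_le ⟨_, Submodule.mem_map_of_mem hmem, hne, hw0⟩) ?_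
    · refine le_csInf ⟨_, _, Submodule.mem_map_of_mem hmem, hne, hw0⟩ ?_
      rintro _ ⟨c, ⟨f, hf, rfl⟩, hc, rfl⟩
      have hf0 : f ≠ 0 := by
        rintro rfl
        exact hc (map_zero _)
      obtain ⟨h1, h2⟩ := (mem_Vq_iff f).mp hf
      rw [hr, hq] at h1
      have h := card_nonzero_lower m (s + 1) 1 (by omega) (by omega) f hf0 h1 h2
      rwa [← hq, hexp, ← wt_eq_card] at h
  · rw [hwt]
    exact Nat.mul_lt_mul_of_pos_right (by omega) (Nat.pow_pos (by omega))

end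
end

section
/- Let q be a prime power with q ≥ 4, let m ≥ 2 and 1 ≤ t ≤ m−1 be integers, and set r = t(q−1) + 1. Let ω_1, …, ω_q be an enumeration of the elements of F_q and let ω'_1, ω'_2 be two distinct elements of F_q. Define Q(X_1,…,X_m) = (Π_{i=1}^{t−1} (X_i^{q−1} − 1)) · (Π_{j=3}^{q} (X_t − ω_j)) · (Π_{k=1}^{2} (X_{t+1} − ω'_k)). Then there is no minimum weight codeword c of RM_q(r,m) whose support is strictly contained in the support of Ev(Q). -/
/-!
Every nonzero codeword `c` of `RM_q(r,m)` whose support lies in `S = Supp (Ev Q)` has support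
equal to `S`.

The set `S` is a box `∏ᵢ Tᵢ`, with `Tᵢ = {0}` for the first `t - 1` coordinates, then a two-element
set, then the complement of `{w1, w2}`, then the whole field. Hence `∑ᵢ (|Tᵢ| - 1) = m(q-1) - r`.
Let `P` and `P'` be points of `S` that differ in a single coordinate, and let `g` be the product of
the `Xᵢ - u` over all `i` and all `u ∈ Tᵢ` other than `Pᵢ`, `P'ᵢ`. Then `deg g < m(q-1) - r`, and `g`
vanishes on `S` exactly outside `{P, P'}`. If `c = Ev f` with `deg f ≤ r`, then `f g` has degree less
than `m(q-1)`, so its values over `F^m` sum to zero (Chevalley–Warning), which reads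
`c(P) g(P) + c(P') g(P') = 0`. So `c(P) ≠ 0` implies `c(P') ≠ 0` (`eval_update_ne_zero`). Any two
points of a box are joined by changing one coordinate at a time, so `c` vanishes nowhere on `S`
(`eval_ne_zero_of_mem_box`).
-/

open MvPolynomial Finset

noncomputable section

/-- Neighbouring points of the box `∏ᵢ Tᵢ` are either both zeros or both non-zeros of a polynomial
of small degree supported on the box. -/
lemma eval_update_ne_zero {F : Type} [Field F] [Fintype F] [DecidableEq F] {m r : ℕ}
    (f : MvPolynomial (Fin m) F) (hf : f.totalDegree ≤ r) (T : Fin m → Finset F)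
    (hT : ∀ x, eval x f ≠ 0 → ∀ i, x i ∈ T i)
    (hdeg : r + ∑ i, ((T i).card - 1) ≤ m * (Fintype.card F - 1))
    (P : Fin m → F) (hP : eval P f ≠ 0) (k : Fin m) (v : F) (hv : v ∈ T k) :
    eval (Function.update P k v) f ≠ 0 := by
  by_cases hvP : v = P k
  · rwa [hvP, Function.update_eq_self]
  set P' := Function.update P k v with hP'
  have hPT := hT P hP
  have hne : P ≠ P' := by
    intro h
    have := congrFun h k
    simp [hP'] at this
    exact hvP this.symm
  set U : Fin m → Finset F := fun i => ((T i).erase (P i)).erase (P' i) with hU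
  set g : MvPolynomial (Fin m) F := ∏ i, ∏ u ∈ U i, (X i - C u) with hg
  have hgdeg : g.totalDegree ≤ ∑ i, (U i).card := by
    refine (totalDegree_finsetProd _ _).trans (Finset.sum_le_sum fun i _ => ?_)
    refine (totalDegree_finsetProd _ _).trans ?_
    rw [Finset.card_eq_sum_ones]
    refine Finset.sum_le_sum fun u _ => ?_
    exact (totalDegree_sub_C_le _ _).trans (totalDegree_X _).le
  have hUlt : ∑ i, (U i).card < ∑ i, ((T i).card - 1) := by
    refine Finset.sum_lt_sum (fun i _ => ?_) ⟨k, Finset.mem_univ _, ?_⟩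
    · rw [← Finset.card_erase_of_mem (hPT i)]
      exact Finset.card_le_card (Finset.erase_subset _ _)
    · rw [← Finset.card_erase_of_mem (hPT k)]
      refine Finset.card_erase_lt_of_mem ?_
      simp [hP', hvP, hv]
  have heval : ∀ x, eval x g = ∏ i, ∏ u ∈ U i, (x i - u) := by
    intro x; simp [hg, map_prod]
  have hgP : eval P g ≠ 0 := by
    rw [heval]
    refine Finset.prod_ne_zero_iff.2 fun i _ => Finset.prod_ne_zero_iff.2 fun u hu => ?_
    simp only [hU, Finset.mem_erase] at hu
    exact sub_ne_zero.2 (Ne.symm hu.2.1)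
  have hgx : ∀ x, x ≠ P → x ≠ P' → eval x (f * g) = 0 := by
    intro x hx hx'
    by_contra h
    rw [map_mul] at h
    have hfx := left_ne_zero_of_mul h
    have hgx := right_ne_zero_of_mul h
    have hxT := hT x hfx
    rw [heval] at hgx
    have key : ∀ i, x i = P i ∨ x i = P' i := by
      intro i
      by_contra! hcon
      refine Finset.prod_ne_zero_iff.1 (Finset.prod_ne_zero_iff.1 hgx i (Finset.mem_univ _))
        (x i) ?_ (sub_self _)
      simp [hU, hcon.1, hcon.2, hxT i]
    have hoff : ∀ i, i ≠ k → x i = P i := by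
      intro i hi
      rcases key i with h | h
      · exact h
      · rw [h, hP', Function.update_of_ne hi]
    rcases key k with hk | hk
    · refine hx (funext fun i => ?_)
      by_cases hi : i = k
      · rw [hi, hk]
      · exact hoff i hi
    · refine hx' (funext fun i => ?_)
      by_cases hi : i = k
      · rw [hi, hk]
      · rw [hoff i hi, hP', Function.update_of_ne hi]
  have hsum : ∑ x, eval x (f * g) = 0 := by
    apply MvPolynomial.sum_eval_eq_zero
    rw [Fintype.card_fin, mul_comm _ m]
    have := totalDegree_mul f g
    omega
  rw [Finset.sum_eq_add P P' hne (fun x _ h => hgx x h.1 h.2) (by simp) (by simp)] at hsum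
  intro h0
  simp only [map_mul, h0, zero_mul, add_zero] at hsum
  exact mul_ne_zero hP hgP hsum

/-- A polynomial of small degree that is supported on a box and nonzero at one point vanishes
nowhere on the box. -/
lemma eval_ne_zero_of_mem_box {F : Type} [Field F] [Fintype F] [DecidableEq F] {m r : ℕ}
    (f : MvPolynomial (Fin m) F) (hf : f.totalDegree ≤ r) (T : Fin m → Finset F)
    (hT : ∀ x, eval x f ≠ 0 → ∀ i, x i ∈ T i)
    (hdeg : r + ∑ i, ((T i).card - 1) ≤ m * (Fintype.card F - 1))
    (P : Fin m → F) (hP : eval P f ≠ 0) (R : Fin m → F) (hR : ∀ i, R i ∈ T i) :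
    eval R f ≠ 0 := by
  have key : ∀ s : Finset (Fin m), eval (s.piecewise R P) f ≠ 0 := by
    intro s
    induction s using Finset.induction_on with
    | empty => simpa using hP
    | insert k s _ ih =>
      rw [Finset.piecewise_insert]
      exact eval_update_ne_zero f hf T hT hdeg _ ih k _ (hR k)
  simpa using key Finset.univ

/-- The `i`-th factor of the box `Supp (Ev Q)`. -/
def boxSide {F : Type} [Field F] [Fintype F] [DecidableEq F] {q : ℕ} (t : ℕ) (e : Fin q → F)
    (w1 w2 : F) (i : ℕ) : Finset F :=
  if i < t - 1 then {0}
  else if i = t - 1 then (Finset.univ.filter (fun j : Fin q => (j : ℕ) < 2)).image e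
  else if i = t then Finset.univ \ {w1, w2}
  else Finset.univ

lemma sum_card_boxSide {F : Type} [Field F] [Fintype F] [DecidableEq F] {q : ℕ}
    (hq : q = Fintype.card F) (hq4 : 4 ≤ q) (m t : ℕ) (ht1 : 1 ≤ t) (ht2 : t ≤ m - 1)
    (e : Fin q → F) (he : Function.Bijective e) (w1 w2 : F) (hw : w1 ≠ w2) :
    t * (q - 1) + 1 + ∑ i : Fin m, ((boxSide t e w1 w2 i).card - 1) = m * (q - 1) := by
  rw [Fin.sum_univ_eq_sum_range (fun i => (boxSide t e w1 w2 i).card - 1)]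
  obtain ⟨s, rfl⟩ : ∃ s, t = s + 1 := ⟨t - 1, by omega⟩
  obtain ⟨n, rfl⟩ : ∃ n, m = s + 1 + 1 + n := ⟨m - (s + 2), by omega⟩
  rw [Finset.sum_range_add, Finset.sum_range_succ, Finset.sum_range_succ]
  have h0 : ∑ i ∈ Finset.range s, ((boxSide (s + 1) e w1 w2 i).card - 1) = 0 := by
    refine Finset.sum_eq_zero fun i hi => ?_
    have := Finset.mem_range.1 hi
    simp [boxSide, this]
  have h1 : (boxSide (s + 1) e w1 w2 s).card = 2 := by
    have hc : (Finset.univ.filter (fun j : Fin q => (j : ℕ) < 2)).card = 2 := by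
      rw [Fin.card_filter_val_lt]; omega
    simp only [boxSide, Nat.add_sub_cancel, lt_irrefl, if_false, if_true,
      Finset.card_image_of_injective _ he.1, hc]
  have h2 : (boxSide (s + 1) e w1 w2 (s + 1)).card = q - 2 := by
    simp [boxSide, Finset.card_sdiff_of_subset, Finset.card_pair hw, hq]
  have h3 : ∑ i ∈ Finset.range n, ((boxSide (s + 1) e w1 w2 (s + 1 + 1 + i)).card - 1)
      = n * (q - 1) := by
    rw [Finset.sum_congr rfl (g := fun _ => q - 1)]
    · simp
    · intro i _
      have a1 : ¬ (s + 1 + 1 + i < s) := by omega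
      have a2 : ¬ (s + 1 + 1 + i = s) := by omega
      have a3 : ¬ (s + 1 + 1 + i = s + 1) := by omega
      simp [boxSide, a1, a2, a3, hq]
  rw [h0, h1, h2, h3]
  obtain ⟨p, rfl⟩ : ∃ p, q = p + 4 := ⟨q - 4, by omega⟩
  simp only [show p + 4 - 1 = p + 3 by omega, show p + 4 - 2 - 1 = p + 1 by omega]
  ring

/-- with `q ≥ 4`, `m ≥ 2`, `1 ≤ t ≤ m−1`, `r = t(q−1)+1` and `Q` as in
Statement 12, no minimum weight codeword of `RM_q(r,m)` has support strictly
contained in the support of `Ev Q`. -/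
theorem stmt_13 (F : Type) [Field F] [Fintype F] (q : ℕ) (hq : q = Fintype.card F)
    (hq4 : 4 ≤ q) (m t r : ℕ) (hm : 2 ≤ m) (ht1 : 1 ≤ t) (ht2 : t ≤ m - 1)
    (hr : r = t * (q - 1) + 1)
    (e : Fin q → F) (he : Function.Bijective e)
    (w1 w2 : F) (hw : w1 ≠ w2)
    (Q : MvPolynomial (Fin m) F)
    (hQ : Q = (∏ i : Fin (t - 1),
        ((X (Fin.castLE (by omega) i) : MvPolynomial (Fin m) F) ^ (q - 1) - 1)) *
      (∏ j ∈ Finset.univ.filter (fun j : Fin q => 2 ≤ (j : ℕ)),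
        (X (⟨t - 1, by omega⟩ : Fin m) - C (e j))) *
      ((X (⟨t, by omega⟩ : Fin m) - C w1) * (X (⟨t, by omega⟩ : Fin m) - C w2))) :
    ¬ ∃ c : (Fin m → F) → F, c ∈ RM F r m ∧ c ≠ 0 ∧ wt c = minDist (RM F r m) ∧
        Function.support c ⊂ Function.support (Ev F m Q) := by
  classical
  rintro ⟨c, hc, hc0, -, hss⟩
  obtain ⟨f, hf, rfl⟩ := hc
  have hfdeg : f.totalDegree ≤ r := (mem_restrictTotalDegree _ _ _).1 hf.1
  have hbox : ∀ x : Fin m → F, eval x Q ≠ 0 ↔ ∀ i : Fin m, x i ∈ boxSide t e w1 w2 i := by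
    intro x
    have hpow : ∀ y : F, y ^ (q - 1) - 1 ≠ 0 ↔ y = 0 := by
      intro y
      constructor
      · intro h
        by_contra hy
        exact h (by rw [hq, FiniteField.pow_card_sub_one_eq_one y hy, sub_self])
      · rintro rfl
        rw [zero_pow (by omega)]
        simp
    have himg : ∀ y : F, (∀ j : Fin q, 2 ≤ (j : ℕ) → y ≠ e j) ↔
        y ∈ (Finset.univ.filter (fun j : Fin q => (j : ℕ) < 2)).image e := by
      intro y
      obtain ⟨j, rfl⟩ := he.2 y
      simp only [ne_eq, he.1.eq_iff, Finset.mem_image, Finset.mem_filter, Finset.mem_univ,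
        true_and, exists_eq_right]
      constructor
      · intro h
        by_contra hj
        exact h j (by omega) rfl
      · rintro h k hk rfl
        omega
    have hev : eval x Q ≠ 0 ↔ (∀ i : Fin (t - 1), x (Fin.castLE (by omega) i) = 0) ∧
        (∀ j : Fin q, 2 ≤ (j : ℕ) → x ⟨t - 1, by omega⟩ ≠ e j) ∧
        x ⟨t, by omega⟩ ≠ w1 ∧ x ⟨t, by omega⟩ ≠ w2 := by
      rw [hQ]
      simp only [map_mul, map_prod, map_sub, map_pow, eval_X, eval_C, map_one, mul_ne_zero_iff,
        Finset.prod_ne_zero_iff, hpow, sub_ne_zero, Finset.mem_filter, Finset.mem_univ, true_and,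
        forall_true_left, and_assoc]
    rw [hev, himg]
    constructor
    · rintro ⟨h1, h2, h3, h4⟩ ⟨i, hi⟩
      unfold boxSide
      dsimp only
      split_ifs with c1 c2 c3
      · exact Finset.mem_singleton.2 (h1 ⟨i, c1⟩)
      · subst c2; exact h2
      · subst c3; simp [h3, h4]
      · simp
    · intro h
      refine ⟨fun i => ?_, ?_, ?_⟩
      · have := h (Fin.castLE (by omega) i)
        simpa [boxSide] using this
      · have := h ⟨t - 1, by omega⟩
        simpa only [boxSide, lt_irrefl, if_false, if_true] using this
      · have := h ⟨t, by omega⟩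
        have a1 : ¬ (t < t - 1) := by omega
        have a2 : ¬ (t = t - 1) := by omega
        simpa [boxSide, a1, a2] using this
  obtain ⟨P, hP⟩ := Function.ne_iff.1 hc0
  refine hss.2 fun x hx => ?_
  refine eval_ne_zero_of_mem_box f hfdeg (fun i => boxSide t e w1 w2 i)
    (fun y hy => (hbox y).1 (hss.1 hy)) ?_ P hP x ((hbox x).1 hx)
  rw [hr, ← hq]
  exact (sum_card_boxSide hq hq4 m t ht1 ht2 e he w1 w2 hw).le

end
end
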